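/- arXiv:2010.00653 — 3 statements merged into one kernel-verified Lean document; each statement's English description precedes it below -/
import Mathlib

section
/- Let K be a field and fix a term order on the polynomial ring K[x_1,...,x_N]. If I and J are ideals that are homogeneous with respect to total degree and init(I + J) = init(I) + init(J), then init(I intersect J) = init(I) intersect init(J). -/
namespace Paper

/-!
We model a permutation of the positive integers `{1, 2, 3, ...}` as an `Equiv.Perm ℕ`
that fixes `0`; all notions below refer only to positive inputs.
-/

/-- The rank `r_w(i,j) = #{a ∈ [i] : w(a) ∈ [j]}` of the `i × j` partial
permutation matrix of `w`, where `[k] = {1, ..., k}`. -/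
def rnk (w : Equiv.Perm ℕ) (i j : ℕ) : ℕ :=
  ((Finset.Icc 1 i).filter fun a => w a ∈ Finset.Icc 1 j).card

/-- Right descent set `Des_R(w) = {i ≥ 1 : w(i) > w(i+1)}`. -/
def DesR (w : Equiv.Perm ℕ) : Set ℕ := {i | 1 ≤ i ∧ w (i + 1) < w i}

/-- Left descent set `Des_L(w) = Des_R(w⁻¹)`. -/
def DesL (w : Equiv.Perm ℕ) : Set ℕ := DesR w⁻¹

/-- `S_∞`: permutations of the positive integers fixing all but finitely many points. -/
def SInfty : Set (Equiv.Perm ℕ) :=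
  {w | w 0 = 0 ∧ Set.Finite {i : ℕ | w i ≠ i}}

/-- `S^{m,n}_∞ = {w ∈ S_∞ : Des_R(w) ⊆ [m], Des_L(w) ⊆ [n]}`. -/
def SmnInfty (m n : ℕ) : Set (Equiv.Perm ℕ) :=
  {w | w ∈ SInfty ∧ DesR w ⊆ Set.Icc 1 m ∧ DesL w ⊆ Set.Icc 1 n}

/-- The Rothe diagram `D(w) = {(i,j) : 0 < j < w(i), 0 < i < w⁻¹(j)}`. -/
def Rothe (w : Equiv.Perm ℕ) : Set (ℕ × ℕ) :=
  {p | 0 < p.2 ∧ p.2 < w p.1 ∧ 0 < p.1 ∧ p.1 < w⁻¹ p.2}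

/-- The function `1_FPF`, sending `i ↦ i - (-1)^i` on positive integers (it fixes `0`). -/
def oneFPF : ℕ → ℕ := fun i => if i % 2 = 1 then i + 1 else i - 1

/-- `I^FPF_∞`: fixed-point-free involutions of the positive integers agreeing with
`1_FPF` at all sufficiently large inputs. -/
def IFPFInfty : Set (Equiv.Perm ℕ) :=
  {z | z 0 = 0 ∧ (∀ i, 1 ≤ i → z i ≠ i) ∧ z * z = 1 ∧ ∃ N, ∀ i, N ≤ i → z i = oneFPF i}

/-- The skew-symmetric Rothe diagram `D^ss(z) = {(i,j) : 0 < j < z(i), j < i < z(j)}`. -/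
def Dss (z : Equiv.Perm ℕ) : Set (ℕ × ℕ) :=
  {p | 0 < p.2 ∧ p.2 < z p.1 ∧ p.2 < p.1 ∧ p.1 < z p.2}

/-- `FPF_n(I_n) = {z ∈ I^FPF_∞ : D^ss(z) ⊆ [n] × [n]}`. -/
def FPFIn (n : ℕ) : Set (Equiv.Perm ℕ) :=
  {z | z ∈ IFPFInfty ∧ Dss z ⊆ Set.Icc 1 n ×ˢ Set.Icc 1 n}

/-- `ℓ_fpf(z) = |D^ss(z)|`. -/
noncomputable def ellFpf (z : Equiv.Perm ℕ) : ℕ := (Dss z).ncard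

/-- Bruhat order on `I^FPF_∞`: reflexive-transitive closure of `z < (i,j) z (i,j)`
whenever `i < j` and `ℓ_fpf` goes up by exactly one. -/
def fpfBruhatLe (z y : Equiv.Perm ℕ) : Prop :=
  Relation.ReflTransGen
    (fun a b => ∃ i j : ℕ, 1 ≤ i ∧ i < j ∧
      b = Equiv.swap i j * a * Equiv.swap i j ∧ ellFpf b = ellFpf a + 1) z y

/-- `i` is a visible descent of `z` if `i ≥ 1` and `z(i+1) < min(i, z(i))`. -/
def visibleDescent (z : Equiv.Perm ℕ) (i : ℕ) : Prop :=
  1 ≤ i ∧ z (i + 1) < min i (z i)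

/-- `Ψ(z, p) = {(p,r) z (p,r) : r > p, ℓ_fpf((p,r) z (p,r)) = ℓ_fpf(z) + 1}`. -/
def PsiSet (z : Equiv.Perm ℕ) (p : ℕ) : Set (Equiv.Perm ℕ) :=
  {y | ∃ r : ℕ, p < r ∧ y = Equiv.swap p r * z * Equiv.swap p r ∧ ellFpf y = ellFpf z + 1}

/-- The dominant component `dom(z) = {(i,j) : i, j ≥ 1, r_z(i,j) = 0}`. -/
def domSet (z : Equiv.Perm ℕ) : Set (ℕ × ℕ) :=
  {p | 1 ≤ p.1 ∧ 1 ≤ p.2 ∧ rnk z p.1 p.2 = 0}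

/-- `(p, q)` is an outer corner of `dom(z)`. -/
def IsOuterCorner (z : Equiv.Perm ℕ) (p q : ℕ) : Prop :=
  1 ≤ p ∧ 1 ≤ q ∧ (p, q) ∉ domSet z ∧
    (p = 1 ∨ (p - 1, q) ∈ domSet z) ∧ (q = 1 ∨ (p, q - 1) ∈ domSet z)

/-- `I_n`: involutions in `S_∞` fixing every `i > n`. -/
def InvolIn (n : ℕ) : Set (Equiv.Perm ℕ) :=
  {w | w 0 = 0 ∧ w * w = 1 ∧ ∀ i, n < i → w i = i}

/-- The fixed points of `z` lying in `[n]`. -/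
def fixedPtsIn (n : ℕ) (z : Equiv.Perm ℕ) : Finset ℕ :=
  (Finset.Icc 1 n).filter fun i => z i = i

/-- The function swapping `m + 2t - 1` and `m + 2t` for every `t ≥ 1`, fixing all other points. -/
def tailSwapFun (m : ℕ) : ℕ → ℕ := fun i =>
  if i ≤ m then i else if (i - m) % 2 = 1 then i + 1 else i - 1

theorem tailSwapFun_involutive (m : ℕ) : Function.Involutive (tailSwapFun m) := by
  intro i
  unfold tailSwapFun
  split_ifs <;> omega

/-- The involution swapping `m + 2t - 1` and `m + 2t` for every `t ≥ 1`. -/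
def tailSwap (m : ℕ) : Equiv.Perm ℕ :=
  Function.Involutive.toPerm _ (tailSwapFun_involutive m)

/-- The fixed-point-free standardization `FPF_n(z) = z ⋅ (i_1,n+1)⋯(i_k,n+k) ⋅ c`,
where `i_1 < ⋯ < i_k` are the fixed points of `z` in `[n]` and `c` swaps
`n+k+2t-1, n+k+2t` for all `t ≥ 1`. -/
noncomputable def fpfStd (n : ℕ) (z : Equiv.Perm ℕ) : Equiv.Perm ℕ :=
  z *
    (List.ofFn fun t : Fin (fixedPtsIn n z).card =>
      Equiv.swap ((fixedPtsIn n z).orderEmbOfFin rfl t) (n + (t : ℕ) + 1)).prod *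
    tailSwap (n + (fixedPtsIn n z).card)

/-- `Mat^ss_n(K)`: skew-symmetric `n × n` matrices (transpose is the negative, zero diagonal).
Row/column index `a : Fin n` corresponds to the (1-indexed) row/column `a + 1`. -/
def MatSS (K : Type*) [CommRing K] (n : ℕ) : Set (Matrix (Fin n) (Fin n) K) :=
  {A | A.transpose = -A ∧ ∀ i, A i i = 0}

/-- The skew-symmetric matrix Schubert variety
`X^ss_z = {A ∈ Mat^ss_n : rank A_{[i][j]} ≤ r_z(i,j) for all i, j ∈ [n]}`. -/
noncomputable def Xss (K : Type*) [Field K] (n : ℕ) (z : Equiv.Perm ℕ) :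
    Set (Matrix (Fin n) (Fin n) K) :=
  {A | A ∈ MatSS K n ∧ ∀ (i j : ℕ) (hi : i ≤ n) (hj : j ≤ n), 1 ≤ i → 1 ≤ j →
    (A.submatrix (Fin.castLE hi) (Fin.castLE hj)).rank ≤ rnk z i j}

/-- `#{(i,j) : i > j, j < z(i), i < z(j)}` for a permutation of `Fin N`
(the `0`-indexed version of `ℓ_fpf`). -/
def ellFpfFin {N : ℕ} (z : Equiv.Perm (Fin N)) : ℕ :=
  (Finset.univ.filter fun p : Fin N × Fin N => p.2 < p.1 ∧ p.2 < z p.1 ∧ p.1 < z p.2).card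

/-- The Pfaffian of an `N × N` matrix:
`pf(A) = ∑_{z fpf involution of [N]} (-1)^{ℓ_fpf(z)} ∏_{z(i) < i} A_{z(i), i}`.
(The sum is empty, hence `0`, when `N` is odd.) -/
noncomputable def Pfaffian {R : Type*} [CommRing R] {N : ℕ} (A : Matrix (Fin N) (Fin N) R) : R :=
  ∑ z ∈ Finset.univ.filter (fun z : Equiv.Perm (Fin N) => (∀ i, z i ≠ i) ∧ ∀ i, z (z i) = i),
    (-1 : R) ^ ellFpfFin z * ∏ i ∈ Finset.univ.filter (fun i : Fin N => z i < i), A (z i) i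

/-- Index set for the variables `u_{ij}`, `n ≥ i > j ≥ 1`, of the coordinate ring
`R_n = K[Mat^ss_n]`; the variable `⟨(a, b), _⟩` is `u_{a+1, b+1}`. -/
abbrev SSVar (n : ℕ) : Type := {p : Fin n × Fin n // p.2 < p.1}

/-- The generic skew-symmetric matrix `U^ss` over `R_n`. -/
noncomputable def Uss (K : Type*) [CommRing K] (n : ℕ) :
    Matrix (Fin n) (Fin n) (MvPolynomial (SSVar n) K) :=
  Matrix.of fun i j =>
    if h : j < i then MvPolynomial.X ⟨(i, j), h⟩
    else if h' : i < j then -MvPolynomial.X ⟨(j, i), h'⟩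
    else 0

/-- The ideal of polynomials vanishing on a set `X`, where a point `A` is evaluated
via `ev A : σ → K`. -/
noncomputable def vanishingIdeal {K : Type*} [CommRing K] {σ M : Type*}
    (X : Set M) (ev : M → σ → K) : Ideal (MvPolynomial σ K) where
  carrier := {f | ∀ A ∈ X, MvPolynomial.eval (ev A) f = 0}
  zero_mem' := by simp
  add_mem' := by
    intro f g hf hg
    simp only [Set.mem_setOf_eq] at *
    intro A hA
    rw [map_add, hf A hA, hg A hA, add_zero]
  smul_mem' := by
    intro c f hf
    simp only [Set.mem_setOf_eq] at *
    intro A hA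
    rw [smul_eq_mul, map_mul, hf A hA, mul_zero]

/-- `I(X^ss_z) ⊆ R_n`, where `u_{ij}` is evaluated at `A` as `A_{ij}`. -/
noncomputable def IXss (K : Type*) [Field K] (n : ℕ) (z : Equiv.Perm ℕ) :
    Ideal (MvPolynomial (SSVar n) K) :=
  vanishingIdeal (Xss K n z) fun A v => A v.1.1 v.1.2

/-- `pf(U^ss_{RR})` for a finite row/column set `R` (listed in increasing order). -/
noncomputable def pfUss (K : Type*) [CommRing K] {n : ℕ} (R : Finset (Fin n)) :
    MvPolynomial (SSVar n) K :=
  Pfaffian ((Uss K n).submatrix (fun s => R.orderEmbOfFin rfl s) fun t => R.orderEmbOfFin rfl t)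

/-- The ideal `I^ss_z`, generated by the Pfaffians `pf(U^ss_{RR})` over all nonempty
even-size `R ⊆ [n]` such that `R ⊆ [i]` and `|R ∩ [j]| > r_z(i,j)` for some `i ≥ j`. -/
noncomputable def IssIdeal (K : Type*) [Field K] (n : ℕ) (z : Equiv.Perm ℕ) :
    Ideal (MvPolynomial (SSVar n) K) :=
  Ideal.span {f : MvPolynomial (SSVar n) K | ∃ R : Finset (Fin n),
    R.Nonempty ∧ Even R.card ∧
    (∃ i j : ℕ, 1 ≤ j ∧ j ≤ i ∧ i ≤ n ∧ (∀ a ∈ R, (a : ℕ) + 1 ≤ i) ∧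
      rnk z i j < (R.filter fun a : Fin n => (a : ℕ) + 1 ≤ j).card) ∧
    f = pfUss K R}

/-- The square-free monomial `u^ss_{AB}`: zero if `A ⊙ B` meets the diagonal, and otherwise
the product of the variables `u_{ij}` over the pairs `i > j` with `(i,j)` or `(j,i)` in
`A ⊙ B = {(a_0, b_r), (a_1, b_{r-1}), ..., (a_r, b_0)}`. -/
noncomputable def ussMon (K : Type*) [CommRing K] {n : ℕ} (A B : Finset (Fin n)) :
    MvPolynomial (SSVar n) K :=
  if h : A.card = B.card then
    if ∃ t : Fin A.card, (A.orderEmbOfFin rfl t : Fin n) = B.orderEmbOfFin h.symm t.rev then 0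
    else
      ∏ v ∈ Finset.univ.filter (fun v : SSVar n => ∃ t : Fin A.card,
          (A.orderEmbOfFin rfl t = v.1.1 ∧ B.orderEmbOfFin h.symm t.rev = v.1.2) ∨
          (A.orderEmbOfFin rfl t = v.1.2 ∧ B.orderEmbOfFin h.symm t.rev = v.1.1)),
        MvPolynomial.X v
  else 0

/-- The monomial ideal `J^ss_r` of a symmetric rank table `r`, generated by the monomials
`u^ss_{AB}` with `A ⊆ [i]`, `B ⊆ [j]`, `|A| = |B| = r(i,j) + 1` for some `n ≥ i ≥ j ≥ 1`. -/
noncomputable def JssIdealOfTable (K : Type*) [CommRing K] (n : ℕ) (r : ℕ → ℕ → ℕ) :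
    Ideal (MvPolynomial (SSVar n) K) :=
  Ideal.span {g : MvPolynomial (SSVar n) K | ∃ (i j : ℕ) (A B : Finset (Fin n)),
    1 ≤ j ∧ j ≤ i ∧ i ≤ n ∧
    (∀ a ∈ A, (a : ℕ) + 1 ≤ i) ∧ (∀ b ∈ B, (b : ℕ) + 1 ≤ j) ∧
    A.card = r i j + 1 ∧ B.card = r i j + 1 ∧ g = ussMon K A B}

/-- `J^ss_z = J^ss_{r_z}`. -/
noncomputable def JssIdeal (K : Type*) [CommRing K] (n : ℕ) (z : Equiv.Perm ℕ) :
    Ideal (MvPolynomial (SSVar n) K) :=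
  JssIdealOfTable K n (rnk z)

/-- Total degree of a monomial (exponent vector). -/
def totalDeg {σ : Type*} (m : σ →₀ ℕ) : ℕ := m.sum fun _ e => e

/-- The lexicographic order on the variables `u_{ij}` by the pair `(i, j)`. -/
def varLT {n : ℕ} (v w : SSVar n) : Prop :=
  v.1.1 < w.1.1 ∨ (v.1.1 = w.1.1 ∧ v.1.2 < w.1.2)

/-- The (graded) reverse lexicographic term order on monomials of `R_n`:
`m₁ < m₂` iff `deg m₁ < deg m₂`, or the degrees agree and the lexicographically largest
variable with different exponents has strictly larger exponent in `m₁`. -/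
def revlexLT {n : ℕ} (m₁ m₂ : SSVar n →₀ ℕ) : Prop :=
  totalDeg m₁ < totalDeg m₂ ∨
    (totalDeg m₁ = totalDeg m₂ ∧ ∃ v, m₂ v < m₁ v ∧ ∀ w, varLT v w → m₁ w = m₂ w)

/-- The initial ideal of `I` with respect to a strict term order `lt`: the ideal
generated by the leading monomials `init(f)` of the nonzero `f ∈ I`. -/
noncomputable def initIdeal {K : Type*} [CommRing K] {σ : Type*}
    (lt : (σ →₀ ℕ) → (σ →₀ ℕ) → Prop) (I : Ideal (MvPolynomial σ K)) :
    Ideal (MvPolynomial σ K) :=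
  Ideal.span {g : MvPolynomial σ K | ∃ f ∈ I, f ≠ 0 ∧ ∃ m : σ →₀ ℕ, m ∈ f.support ∧
    (∀ m' ∈ f.support, m' ≠ m → lt m' m) ∧ g = MvPolynomial.monomial m (1 : K)}

/-- A term order on the monomials of a polynomial ring: a linear order in which `1` is
the unique minimum and multiplication by a fixed monomial preserves order. -/
structure TermOrder (σ : Type*) where
  le : (σ →₀ ℕ) → (σ →₀ ℕ) → Prop
  trans : ∀ a b c, le a b → le b c → le a c
  antisymm : ∀ a b, le a b → le b a → a = b
  total : ∀ a b, le a b ∨ le b a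
  zero_le : ∀ a, le 0 a
  add_le_add_right : ∀ a b c, le a b → le (a + c) (b + c)

/-- The initial ideal of `I` with respect to a term order `τ`. -/
noncomputable def initIdealLe {K : Type*} [CommRing K] {σ : Type*}
    (τ : TermOrder σ) (I : Ideal (MvPolynomial σ K)) : Ideal (MvPolynomial σ K) :=
  Ideal.span {g : MvPolynomial σ K | ∃ f ∈ I, f ≠ 0 ∧ ∃ m : σ →₀ ℕ, m ∈ f.support ∧
    (∀ m' ∈ f.support, τ.le m' m) ∧ g = MvPolynomial.monomial m (1 : K)}

/-- An ideal is homogeneous (w.r.t. total degree) iff it contains all homogeneous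
components of its elements. -/
def IsHomogIdeal {K : Type*} [CommSemiring K] {σ : Type*}
    (I : Ideal (MvPolynomial σ K)) : Prop :=
  ∀ f ∈ I, ∀ d : ℕ, MvPolynomial.homogeneousComponent d f ∈ I

/-- The reading order on boxes: rows top to bottom, each row right to left. -/
def pdRel (p q : ℕ × ℕ) : Prop := p.1 < q.1 ∨ (p.1 = q.1 ∧ q.2 ≤ p.2)

instance : DecidableRel pdRel := fun p q => by unfold pdRel; infer_instance

instance : IsTrans (ℕ × ℕ) pdRel :=
  ⟨fun a b c hab hbc => by unfold pdRel at *; omega⟩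

instance : IsAntisymm (ℕ × ℕ) pdRel :=
  ⟨fun a b hab hba => by
    unfold pdRel at hab hba
    exact Prod.ext_iff.mpr ⟨by omega, by omega⟩⟩

instance : IsTotal (ℕ × ℕ) pdRel :=
  ⟨fun a b => by unfold pdRel; omega⟩

/-- The pipe dream reading word of a finite set `D` of boxes: the letters `i + j - 1`
over `(i, j) ∈ D`, in the order making `(i, -j)` increase lexicographically. -/
def pdWord (D : Finset (ℕ × ℕ)) : List ℕ :=
  (D.sort pdRel).map fun p => p.1 + p.2 - 1

/-- The product `s_{i_1} s_{i_2} ⋯ s_{i_l}` of simple transpositions. -/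
def wordProd (l : List ℕ) : Equiv.Perm ℕ :=
  (l.map fun i => Equiv.swap i (i + 1)).prod

/-- `l` is a reduced word for `w`: a minimal-length word of positive letters whose
product of simple transpositions is `w`. -/
def IsReducedWordOf (w : Equiv.Perm ℕ) (l : List ℕ) : Prop :=
  (∀ a ∈ l, 1 ≤ a) ∧ wordProd l = w ∧
    ∀ l' : List ℕ, (∀ a ∈ l', 1 ≤ a) → wordProd l' = w → l.length ≤ l'.length

/-- The set `RP(w)` of reduced pipe dreams for `w`. -/
def RP (w : Equiv.Perm ℕ) : Set (Finset (ℕ × ℕ)) :=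
  {D | (∀ p ∈ D, 1 ≤ p.1 ∧ 1 ≤ p.2) ∧ IsReducedWordOf w (pdWord D)}

/-- `I^FPF_m`: involutions in `S_∞` that are fixed-point-free on `[m]` and fix
all `i > m`. -/
def IFPFm (m : ℕ) : Set (Equiv.Perm ℕ) :=
  {y | y 0 = 0 ∧ y * y = 1 ∧ (∀ i, 1 ≤ i → i ≤ m → y i ≠ i) ∧ ∀ i, m < i → y i = i}

/-- `z = FPF_m(y)`: `z` agrees with `y` on `[m]` and swaps `m + 2k - 1, m + 2k`
for all `k ≥ 1`. -/
def IsFPFStdOf (m : ℕ) (y z : Equiv.Perm ℕ) : Prop :=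
  (∀ i, i ≤ m → z i = y i) ∧
    ∀ k : ℕ, z (m + 2 * k + 1) = m + 2 * k + 2 ∧ z (m + 2 * k + 2) = m + 2 * k + 1

/-- The set `FP(z)` of fpf-involution pipe dreams for `z ∈ I^FPF_∞`. -/
def FP (z : Equiv.Perm ℕ) : Set (Finset (ℕ × ℕ)) :=
  {E | ∃ (m : ℕ) (y : Equiv.Perm ℕ) (D : Finset (ℕ × ℕ)), Even m ∧ y ∈ IFPFm m ∧
    IsFPFStdOf m y z ∧ D ∈ RP y ∧ D.image Prod.swap = D ∧
    E = D.filter fun p => p.2 < p.1}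

/-- The minor `det(U_{AB})` of the generic `m × n` matrix `U`, with rows `A` and
columns `B` listed in increasing order. -/
noncomputable def genMinor (K : Type*) [CommRing K] {m n : ℕ}
    (A : Finset (Fin m)) (B : Finset (Fin n)) (h : A.card = B.card) :
    MvPolynomial (Fin m × Fin n) K :=
  (Matrix.of fun s t : Fin A.card =>
    (MvPolynomial.X (A.orderEmbOfFin rfl s, B.orderEmbOfFin h.symm t) :
      MvPolynomial (Fin m × Fin n) K)).det

/-- The antidiagonal monomial `u_{AB} = ∏_{(a,b) ∈ A ⊙ B} u_{ab}`. -/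
noncomputable def genMon (K : Type*) [CommRing K] {m n : ℕ}
    (A : Finset (Fin m)) (B : Finset (Fin n)) (h : A.card = B.card) :
    MvPolynomial (Fin m × Fin n) K :=
  ∏ t : Fin A.card, MvPolynomial.X (A.orderEmbOfFin rfl t, B.orderEmbOfFin h.symm t.rev)

/-- The exponent vector of the antidiagonal monomial `u_{AB}`. -/
noncomputable def antidiagExp {m n : ℕ} (A : Finset (Fin m)) (B : Finset (Fin n))
    (h : A.card = B.card) : (Fin m × Fin n) →₀ ℕ :=
  ∑ t : Fin A.card, Finsupp.single (A.orderEmbOfFin rfl t, B.orderEmbOfFin h.symm t.rev) 1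

/-- The ideal `I_w`, generated by the minors `det(U_{AB})` with `A ⊆ [i]`, `B ⊆ [j]`,
`|A| = |B| = r_w(i,j) + 1` for some `(i,j) ∈ [m] × [n]`. -/
noncomputable def IwIdeal (K : Type*) [Field K] (m n : ℕ) (w : Equiv.Perm ℕ) :
    Ideal (MvPolynomial (Fin m × Fin n) K) :=
  Ideal.span {g : MvPolynomial (Fin m × Fin n) K |
    ∃ (i j : ℕ) (A : Finset (Fin m)) (B : Finset (Fin n)) (h : A.card = B.card),
      1 ≤ i ∧ i ≤ m ∧ 1 ≤ j ∧ j ≤ n ∧ (∀ a ∈ A, (a : ℕ) + 1 ≤ i) ∧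
      (∀ b ∈ B, (b : ℕ) + 1 ≤ j) ∧ A.card = rnk w i j + 1 ∧ g = genMinor K A B h}

/-- The monomial ideal `J_w`, generated by the monomials `u_{AB}` with `A ⊆ [i]`,
`B ⊆ [j]`, `|A| = |B| = r_w(i,j) + 1` for some `(i,j) ∈ [m] × [n]`. -/
noncomputable def JwIdeal (K : Type*) [Field K] (m n : ℕ) (w : Equiv.Perm ℕ) :
    Ideal (MvPolynomial (Fin m × Fin n) K) :=
  Ideal.span {g : MvPolynomial (Fin m × Fin n) K |
    ∃ (i j : ℕ) (A : Finset (Fin m)) (B : Finset (Fin n)) (h : A.card = B.card),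
      1 ≤ i ∧ i ≤ m ∧ 1 ≤ j ∧ j ≤ n ∧ (∀ a ∈ A, (a : ℕ) + 1 ≤ i) ∧
      (∀ b ∈ B, (b : ℕ) + 1 ≤ j) ∧ A.card = rnk w i j + 1 ∧ g = genMon K A B h}

/-- The matrix Schubert variety
`X_w = {A ∈ Mat_{m×n} : rank A_{[i][j]} ≤ r_w(i,j) for all (i,j) ∈ [m] × [n]}`. -/
noncomputable def Xw (K : Type*) [Field K] (m n : ℕ) (w : Equiv.Perm ℕ) :
    Set (Matrix (Fin m) (Fin n) K) :=
  {A | ∀ (i j : ℕ) (hi : i ≤ m) (hj : j ≤ n), 1 ≤ i → 1 ≤ j →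
    (A.submatrix (Fin.castLE hi) (Fin.castLE hj)).rank ≤ rnk w i j}

/-- `I(X_w)`: the ideal of polynomials vanishing on `X_w`. -/
noncomputable def IXw (K : Type*) [Field K] (m n : ℕ) (w : Equiv.Perm ℕ) :
    Ideal (MvPolynomial (Fin m × Fin n) K) :=
  vanishingIdeal (Xw K m n w) fun A v => A v.1 v.2

/-- The variable `u_{pq}` (with `1 ≤ q < p ≤ n`) of `R_n`. -/
def ssvar {n : ℕ} (p q : ℕ) (hp : p ≤ n) (hq : 1 ≤ q) (hqp : q < p) : SSVar n :=
  ⟨(⟨p - 1, by omega⟩, ⟨q - 1, by omega⟩), Fin.mk_lt_mk.mpr (by omega)⟩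

/-- Index set for the variables `u_{ij}`, `i > j ≥ 1`, over all positive integers. -/
abbrev PVar : Type := {p : ℕ × ℕ // 1 ≤ p.2 ∧ p.2 < p.1}

/-- The generic skew-symmetric array `U^ss` over the positive integers:
`u_{xy}` if `x > y`, `-u_{yx}` if `x < y`, `0` if `x = y`. -/
noncomputable def UssP (K : Type*) [CommRing K] (x y : ℕ) : MvPolynomial PVar K :=
  if h : 1 ≤ y ∧ y < x then MvPolynomial.X ⟨(x, y), h⟩
  else if h' : 1 ≤ x ∧ x < y then -MvPolynomial.X ⟨(y, x), h'⟩
  else 0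

/-- `pf(U^ss_{RR})` for a finite set `R` of positive integers. -/
noncomputable def pfUssP (K : Type*) [CommRing K] (R : Finset ℕ) : MvPolynomial PVar K :=
  Pfaffian (Matrix.of fun s t : Fin R.card =>
    UssP K (R.orderEmbOfFin rfl s) (R.orderEmbOfFin rfl t))

/-- `g_{AB}`: the Pfaffian of the `(|B|+|A|) × (|B|+|A|)` skew-symmetric matrix whose
rows and columns are labeled by `B` (increasing) followed by `A` (increasing), with
entry `U^ss_{xy}` at a position labeled `(x, y)`, except that the entry is `0` when
both labels come from the `A`-block. -/
noncomputable def gAB (K : Type*) [CommRing K] (A B : Finset ℕ) : MvPolynomial PVar K :=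
  Pfaffian ((Matrix.of fun p q : Fin B.card ⊕ Fin A.card =>
      match p, q with
      | Sum.inl s, Sum.inl t => UssP K (B.orderEmbOfFin rfl s) (B.orderEmbOfFin rfl t)
      | Sum.inl s, Sum.inr t => UssP K (B.orderEmbOfFin rfl s) (A.orderEmbOfFin rfl t)
      | Sum.inr s, Sum.inl t => UssP K (A.orderEmbOfFin rfl s) (B.orderEmbOfFin rfl t)
      | Sum.inr _, Sum.inr _ => (0 : MvPolynomial PVar K)).submatrix
    finSumFinEquiv.symm finSumFinEquiv.symm)

/-- The exponent of the sign `⟨T, S⟩ = (-1)^{|S||T| + C(|S|,2) + ∑ of the (1-indexed)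
positions in the increasing enumeration of `T` occupied by elements of `S`}`. -/
def setSgnExp (T S : Finset ℕ) : ℕ :=
  S.card * T.card + Nat.choose S.card 2 +
    ∑ t : Fin T.card, if T.orderEmbOfFin rfl t ∈ S then (t : ℕ) + 1 else 0


/-- The set of leading exponents of an ideal. -/
def leadSet {K : Type*} [Field K] {N : ℕ} (τ : TermOrder (Fin N))
    (I : Ideal (MvPolynomial (Fin N) K)) : Set (Fin N →₀ ℕ) :=
  {m | ∃ f ∈ I, MvPolynomial.coeff m f = 1 ∧ ∀ m' ∈ f.support, τ.le m' m}

theorem leadSet_up {K : Type*} [Field K] {N : ℕ} (τ : TermOrder (Fin N))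
    (I : Ideal (MvPolynomial (Fin N) K)) {a b : Fin N →₀ ℕ} (ha : a ∈ leadSet τ I)
    (hab : a ≤ b) : b ∈ leadSet τ I := by
  obtain ⟨f, hf, h1, h2⟩ := ha
  obtain ⟨c, rfl⟩ := le_iff_exists_add.mp hab
  refine ⟨f * MvPolynomial.monomial c 1, I.mul_mem_right _ hf, ?_, ?_⟩
  · rw [MvPolynomial.coeff_mul_monomial, h1, mul_one]
  · intro m' hm'
    rw [MvPolynomial.mem_support_iff, MvPolynomial.coeff_mul_monomial'] at hm'
    split_ifs at hm' with hc
    · obtain ⟨d, rfl⟩ := le_iff_exists_add.mp hc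
      rw [mul_one, add_tsub_cancel_left] at hm'
      rw [add_comm c d]
      exact τ.add_le_add_right _ _ _ (h2 d (MvPolynomial.mem_support_iff.mpr hm'))
    · exact absurd rfl hm'

theorem initIdealLe_eq {K : Type*} [Field K] {N : ℕ} (τ : TermOrder (Fin N))
    (I : Ideal (MvPolynomial (Fin N) K)) :
    initIdealLe τ I = Ideal.span ((fun s => MvPolynomial.monomial s (1 : K)) '' leadSet τ I) := by
  unfold initIdealLe
  congr 1
  ext g
  constructor
  · rintro ⟨f, hf, -, m, hm, hmax, rfl⟩
    have hc := MvPolynomial.mem_support_iff.mp hm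
    refine ⟨m, ⟨MvPolynomial.C (MvPolynomial.coeff m f)⁻¹ * f, I.mul_mem_left _ hf, ?_, ?_⟩, rfl⟩
    · rw [MvPolynomial.coeff_C_mul, inv_mul_cancel₀ hc]
    · intro m' hm'
      apply hmax
      rw [MvPolynomial.mem_support_iff, MvPolynomial.coeff_C_mul] at hm'
      exact MvPolynomial.mem_support_iff.mpr (right_ne_zero_of_mul hm')
  · rintro ⟨m, ⟨f, hf, h1, h2⟩, rfl⟩
    have hm : m ∈ f.support := MvPolynomial.mem_support_iff.mpr (by rw [h1]; exact one_ne_zero)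
    refine ⟨f, hf, ?_, m, hm, h2, rfl⟩
    rintro rfl
    simp at hm

theorem mem_span_up {K : Type*} [Field K] {N : ℕ} {s : Set (Fin N →₀ ℕ)}
    (hs : ∀ a b, a ∈ s → a ≤ b → b ∈ s) (x : MvPolynomial (Fin N) K) :
    x ∈ Ideal.span ((fun s => MvPolynomial.monomial s (1 : K)) '' s) ↔
      ∀ m ∈ x.support, m ∈ s := by
  rw [MvPolynomial.mem_ideal_span_monomial_image]
  refine forall₂_congr fun m _ => ⟨?_, fun h => ⟨m, h, le_rfl⟩⟩
  rintro ⟨a, ha, hab⟩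
  exact hs a m ha hab

theorem TermOrder.exists_max {N : ℕ} (τ : TermOrder (Fin N)) (s : Finset (Fin N →₀ ℕ)) :
    s.Nonempty → ∃ m ∈ s, ∀ m' ∈ s, τ.le m' m := by
  classical
  intro hs
  induction hs using Finset.Nonempty.cons_induction with
  | singleton a =>
    refine ⟨a, by simp, fun m' hm' => ?_⟩
    rw [Finset.mem_singleton.mp hm']
    exact (τ.total a a).elim id id
  | cons a s ha hs ih =>
    obtain ⟨m, hm, hmax⟩ := ih
    rcases τ.total a m with hl | hl
    · refine ⟨m, Finset.mem_cons_of_mem hm, fun m' hm' => ?_⟩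
      rcases Finset.mem_cons.mp hm' with rfl | h'
      · exact hl
      · exact hmax _ h'
    · refine ⟨a, Finset.mem_cons_self _ _, fun m' hm' => ?_⟩
      rcases Finset.mem_cons.mp hm' with rfl | h'
      · exact (τ.total _ _).elim id id
      · exact τ.trans _ _ _ (hmax _ h') hl

theorem TermOrder.le_of_le {N : ℕ} (τ : TermOrder (Fin N)) {a b : Fin N →₀ ℕ} (h : a ≤ b) :
    τ.le a b := by
  obtain ⟨c, rfl⟩ := le_iff_exists_add.mp h
  have := τ.add_le_add_right _ _ a (τ.zero_le c)
  rwa [zero_add, add_comm] at this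

theorem TermOrder.wf {N : ℕ} (τ : TermOrder (Fin N)) :
    WellFounded fun a b : Fin N →₀ ℕ => τ.le a b ∧ a ≠ b := by
  have : IsStrictOrder (Fin N →₀ ℕ) fun a b => τ.le a b ∧ a ≠ b :=
    { irrefl := fun a h => h.2 rfl
      trans := fun a b c h1 h2 => ⟨τ.trans _ _ _ h1.1 h2.1, by
        rintro rfl
        exact h1.2 (τ.antisymm _ _ h1.1 h2.1)⟩ }
  rw [RelEmbedding.wellFounded_iff_isEmpty]
  refine ⟨fun e => ?_⟩
  obtain ⟨i, j, hij, hle⟩ := wellQuasiOrdered_le (α := Fin N →₀ ℕ) e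
  have h1 := e.map_rel_iff.mpr (show j > i from hij)
  exact h1.2 (τ.antisymm _ _ h1.1 (τ.le_of_le hle))

theorem decomp {K : Type*} [Field K] {N : ℕ} (τ : TermOrder (Fin N))
    (I J : Ideal (MvPolynomial (Fin N) K))
    (hL : ∀ m ∈ leadSet τ (I + J), m ∈ leadSet τ I ∨ m ∈ leadSet τ J) (m : Fin N →₀ ℕ) :
    ∀ p ∈ I + J, m ∈ p.support → (∀ m' ∈ p.support, τ.le m' m) →
      ∃ a ∈ I, ∃ b ∈ J, p = a + b ∧ (∀ m' ∈ a.support, τ.le m' m) ∧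
        ∀ m' ∈ b.support, τ.le m' m := by
  classical
  induction m using τ.wf.induction with
  | _ m ih =>
  intro p hp hm hmax
  have hc := MvPolynomial.mem_support_iff.mp hm
  have hml : m ∈ leadSet τ (I + J) := by
    refine ⟨MvPolynomial.C (MvPolynomial.coeff m p)⁻¹ * p, Ideal.mul_mem_left _ _ hp, ?_, ?_⟩
    · rw [MvPolynomial.coeff_C_mul, inv_mul_cancel₀ hc]
    · intro m' hm'
      apply hmax
      rw [MvPolynomial.mem_support_iff, MvPolynomial.coeff_C_mul] at hm'
      exact MvPolynomial.mem_support_iff.mpr (right_ne_zero_of_mul hm')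
  have bnd : ∀ f g : MvPolynomial (Fin N) K, (∀ m' ∈ f.support, τ.le m' m) →
      (∀ m' ∈ g.support, τ.le m' m) → ∀ m' ∈ (f + g).support, τ.le m' m := by
    intro f g hf hg m' hm'
    rcases Finset.mem_union.mp (MvPolynomial.support_add hm') with h | h
    · exact hf _ h
    · exact hg _ h
  have bndC : ∀ (c : K) (f : MvPolynomial (Fin N) K), (∀ m' ∈ f.support, τ.le m' m) →
      ∀ m' ∈ (MvPolynomial.C c * f).support, τ.le m' m := by
    intro c f hf m' hm'
    rw [MvPolynomial.mem_support_iff, MvPolynomial.coeff_C_mul] at hm'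
    exact hf _ (MvPolynomial.mem_support_iff.mpr (right_ne_zero_of_mul hm'))
  have key : ∀ f ∈ I + J, MvPolynomial.coeff m f = 1 → (∀ m' ∈ f.support, τ.le m' m) →
      ∃ c : K, ∃ a ∈ I, ∃ b ∈ J, p = MvPolynomial.C c * f + (a + b) ∧
        (∀ m' ∈ a.support, τ.le m' m) ∧ ∀ m' ∈ b.support, τ.le m' m := by
    intro f hf h1 h2
    refine ⟨MvPolynomial.coeff m p, ?_⟩
    set q := p + MvPolynomial.C (-MvPolynomial.coeff m p) * f with hq
    have hpq : p = MvPolynomial.C (MvPolynomial.coeff m p) * f + q := by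
      rw [hq, map_neg]; ring
    by_cases hq0 : q = 0
    · refine ⟨0, I.zero_mem, 0, J.zero_mem, ?_, by simp, by simp⟩
      rw [add_zero, ← hq0]
      exact hpq
    obtain ⟨m1, hm1, hmax1⟩ := τ.exists_max q.support (MvPolynomial.support_nonempty.mpr hq0)
    have hle : τ.le m1 m := bnd _ _ hmax (bndC _ _ h2) m1 hm1
    have hne : m1 ≠ m := by
      rintro rfl
      rw [MvPolynomial.mem_support_iff, hq, MvPolynomial.coeff_add, MvPolynomial.coeff_C_mul,
        h1] at hm1
      simp at hm1
    obtain ⟨a, ha, b, hb, hab, h3, h4⟩ := ih m1 ⟨hle, hne⟩ q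
      (Ideal.add_mem _ hp (Ideal.mul_mem_left _ _ hf)) hm1 hmax1
    exact ⟨a, ha, b, hb, by rw [← hab]; exact hpq,
      fun m' h => τ.trans _ _ _ (h3 m' h) hle, fun m' h => τ.trans _ _ _ (h4 m' h) hle⟩
  rcases hL m hml with ⟨f, hf, h1, h2⟩ | ⟨f, hf, h1, h2⟩
  · obtain ⟨c, a, ha, b, hb, hab, h3, h4⟩ := key f (Ideal.mem_sup_left hf) h1 h2
    exact ⟨MvPolynomial.C c * f + a, I.add_mem (I.mul_mem_left _ hf) ha, b, hb,
      by rw [hab]; ring, bnd _ _ (bndC _ _ h2) h3, h4⟩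
  · obtain ⟨c, a, ha, b, hb, hab, h3, h4⟩ := key f (Ideal.mem_sup_right hf) h1 h2
    exact ⟨a, ha, MvPolynomial.C c * f + b, J.add_mem (J.mul_mem_left _ hf) hb,
      by rw [hab]; ring, h3, bnd _ _ (bndC _ _ h2) h4⟩

theorem leadSet_inf {K : Type*} [Field K] {N : ℕ} (τ : TermOrder (Fin N))
    (I J : Ideal (MvPolynomial (Fin N) K))
    (hL : ∀ m ∈ leadSet τ (I + J), m ∈ leadSet τ I ∨ m ∈ leadSet τ J) (m : Fin N →₀ ℕ) :
    m ∈ leadSet τ (I ⊓ J) ↔ m ∈ leadSet τ I ∧ m ∈ leadSet τ J := by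
  classical
  constructor
  · rintro ⟨f, hf, h⟩
    exact ⟨⟨f, hf.1, h⟩, ⟨f, hf.2, h⟩⟩
  rintro ⟨⟨f, hf, f1, f2⟩, ⟨g, hg, g1, g2⟩⟩
  by_cases hq0 : f - g = 0
  · exact ⟨f, ⟨hf, by rw [sub_eq_zero.mp hq0]; exact hg⟩, f1, f2⟩
  obtain ⟨m1, hm1, hmax1⟩ := τ.exists_max (f - g).support (MvPolynomial.support_nonempty.mpr hq0)
  have hle : τ.le m1 m := by
    rcases Finset.mem_union.mp (MvPolynomial.support_sub _ _ _ hm1) with h | h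
    · exact f2 _ h
    · exact g2 _ h
  have hne : m1 ≠ m := by
    rintro rfl
    rw [MvPolynomial.mem_support_iff, MvPolynomial.coeff_sub, f1, g1] at hm1
    simp at hm1
  obtain ⟨a, ha, b, hb, hab, h3, -⟩ := decomp τ I J hL m1 (f - g)
    (Ideal.sub_mem _ (Ideal.mem_sup_left hf) (Ideal.mem_sup_right hg)) hm1 hmax1
  refine ⟨f - a, ⟨I.sub_mem hf ha, ?_⟩, ?_, ?_⟩
  · have : f - a = g + b := by linear_combination hab
    rw [this]
    exact J.add_mem hg hb
  · have : MvPolynomial.coeff m a = 0 := by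
      by_contra hc
      exact hne (τ.antisymm _ _ hle (h3 m (MvPolynomial.mem_support_iff.mpr hc)))
    rw [MvPolynomial.coeff_sub, f1, this, sub_zero]
  · intro m' hm'
    rcases Finset.mem_union.mp (MvPolynomial.support_sub _ _ _ hm') with h | h
    · exact f2 _ h
    · exact τ.trans _ _ _ (h3 _ h) hle

/-- Fix a term order on `K[x_1, ..., x_N]`. If `I` and `J` are
homogeneous ideals with `init(I + J) = init(I) + init(J)`, then
`init(I ∩ J) = init(I) ∩ init(J)`. -/
theorem statement13 (K : Type*) [Field K] (N : ℕ) (τ : TermOrder (Fin N))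
    (I J : Ideal (MvPolynomial (Fin N) K)) (hI : IsHomogIdeal I) (hJ : IsHomogIdeal J)
    (h : initIdealLe τ (I + J) = initIdealLe τ I + initIdealLe τ J) :
    initIdealLe τ (I ⊓ J) = initIdealLe τ I ⊓ initIdealLe τ J := by
  have up : ∀ I : Ideal (MvPolynomial (Fin N) K), ∀ a b, a ∈ leadSet τ I → a ≤ b →
      b ∈ leadSet τ I := fun I a b ha hab => leadSet_up τ I ha hab
  have hL : ∀ m ∈ leadSet τ (I + J), m ∈ leadSet τ I ∨ m ∈ leadSet τ J := by
    intro m hm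
    have h1 : MvPolynomial.monomial m (1 : K) ∈ initIdealLe τ (I + J) := by
      rw [initIdealLe_eq]
      exact Ideal.subset_span ⟨m, hm, rfl⟩
    rw [h, initIdealLe_eq, initIdealLe_eq, Submodule.add_eq_sup, ← Ideal.span_union,
      ← Set.image_union, mem_span_up] at h1
    · exact h1 m (by rw [MvPolynomial.mem_support_iff]; simp)
    · rintro a b (ha | ha) hab
      · exact Or.inl (up I a b ha hab)
      · exact Or.inr (up J a b ha hab)
  ext x
  rw [Submodule.mem_inf, initIdealLe_eq, initIdealLe_eq, initIdealLe_eq, mem_span_up (up _),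
    mem_span_up (up _), mem_span_up (up _), ← forall₂_and]
  exact forall₂_congr fun m _ => leadSet_inf τ I J hL m

end Paper
end

section
/- Let K be a field and let J subset of I be ideals of K[x_1,...,x_N] that are homogeneous with respect to total degree. Suppose f is a non-constant homogeneous polynomial such that I intersect (f) = f*I and I + (f) = J + (f), where (f) denotes the principal ideal generated by f and f*I := {f*g : g in I} generates the ideal of all multiples of f by elements of I. Then I = J. -/
namespace Paper

/-- Let `J ⊆ I` be homogeneous ideals of `K[x_1, ..., x_N]` and let
`f` be a non-constant homogeneous polynomial with `I ∩ (f) = f⬝I` and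
`I + (f) = J + (f)`. Then `I = J`. -/
theorem statement14 (K : Type*) [Field K] (N : ℕ)
    (I J : Ideal (MvPolynomial (Fin N) K)) (hJI : J ≤ I)
    (hI : IsHomogIdeal I) (hJ : IsHomogIdeal J) (f : MvPolynomial (Fin N) K)
    (hf : ∃ d : ℕ, f.IsHomogeneous d) (hfc : ∀ c : K, f ≠ MvPolynomial.C c)
    (h1 : I ⊓ Ideal.span {f} =
      Ideal.span {g : MvPolynomial (Fin N) K | ∃ i ∈ I, g = f * i})
    (h2 : I + Ideal.span {f} = J + Ideal.span {f}) :
    I = J := by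
  obtain ⟨d, hd⟩ := hf
  have hd0 : 0 < d := by
    rcases Nat.eq_zero_or_pos d with h | h
    · subst h
      exact absurd (MvPolynomial.totalDegree_eq_zero_iff_eq_C.mp
        (Nat.le_zero.mp hd.totalDegree_le)) (hfc _)
    · exact h
  have key : ∀ g ∈ I, ∃ j ∈ J, ∃ i ∈ I, g = j + f * i := by
    intro g hg
    have hg2 : g ∈ J + Ideal.span {f} := by
      rw [← h2]
      exact Ideal.mem_sup_left hg
    obtain ⟨j, hj, y, hy, hjy⟩ := Submodule.mem_sup.mp hg2
    have hyI : y ∈ I ⊓ Ideal.span {f} := by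
      refine ⟨?_, hy⟩
      have : y = g - j := by rw [← hjy]; ring
      rw [this]
      exact I.sub_mem hg (hJI hj)
    rw [h1] at hyI
    have hall : ∃ i ∈ I, y = f * i := by
      clear hjy hy
      induction hyI using Submodule.span_induction with
      | mem x hx => exact hx
      | zero => exact ⟨0, I.zero_mem, by simp⟩
      | add a b _ _ ha hb =>
        obtain ⟨i, hi, rfl⟩ := ha
        obtain ⟨k, hk, rfl⟩ := hb
        exact ⟨i + k, I.add_mem hi hk, by ring⟩
      | smul c a _ ha =>
        obtain ⟨i, hi, rfl⟩ := ha
        exact ⟨c * i, I.mul_mem_left c hi, by rw [smul_eq_mul]; ring⟩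
    obtain ⟨i, hi, rfl⟩ := hall
    exact ⟨j, hj, i, hi, hjy.symm⟩
  have key2 : ∀ k : ℕ, ∀ g ∈ I, ∃ j ∈ J, ∃ a, g = j + f ^ k * a := by
    intro k
    induction k with
    | zero => exact fun g _ => ⟨0, J.zero_mem, g, by simp⟩
    | succ k ih =>
      intro g hg
      obtain ⟨j, hj, i, hi, rfl⟩ := key g hg
      obtain ⟨j', hj', a, rfl⟩ := ih i hi
      exact ⟨j + f * j', J.add_mem hj (J.mul_mem_left f hj'), a, by ring⟩
  have low : ∀ (n : ℕ) (a : MvPolynomial (Fin N) K),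
      MvPolynomial.homogeneousComponent n (f ^ (n + 1) * a) = 0 := by
    intro n a
    ext m
    rw [MvPolynomial.coeff_homogeneousComponent, MvPolynomial.coeff_zero]
    split_ifs with hm
    · rw [MvPolynomial.coeff_mul]
      refine Finset.sum_eq_zero fun p hp => ?_
      have hp' := Finset.HasAntidiagonal.mem_antidiagonal.mp hp
      rw [(hd.pow (n + 1)).coeff_eq_zero, zero_mul]
      have h3 : p.1.degree + p.2.degree = n := by
        rw [← hm, ← hp', map_add]
      have h4 : n + 1 ≤ d * (n + 1) := Nat.le_mul_of_pos_left _ hd0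
      omega
    · rfl
  refine le_antisymm (fun g hg => ?_) hJI
  rw [← MvPolynomial.sum_homogeneousComponent g]
  refine J.sum_mem fun n _ => ?_
  obtain ⟨j, hj, a, rfl⟩ := key2 (n + 1) g hg
  rw [map_add, low, add_zero]
  exact hJ j hj n

end Paper
end

section
/- Let K be an algebraically closed field, let n >= 1, let z in FPF_n(I_n), and let (p,q) be an outer corner of dom(z) with n >= p > q. Then: (1) Psi(z,p) is contained in FPF_n(I_n); (2) I(X^ss_z) + (u_{pq}) is contained in the intersection over v in Psi(z,p) of I(X^ss_v); and (3) J^ss_z + (u_{pq}) equals the intersection over v in Psi(z,p) of J^ss_v, where (u_{pq}) denotes the principal ideal of R_n generated by the variable u_{pq}. -/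
namespace Paper

section
open Finset

theorem aux_split (M p r : ℕ) (hpr : p < r) (hr : r < M) (f : ℕ → ℕ) :
    ∑ a ∈ range M, f a = f p + f r + ∑ a ∈ ((range M).erase p).erase r, f a := by
  rw [← Finset.add_sum_erase (range M) f (a := p) (by simp; omega),
    ← Finset.add_sum_erase ((range M).erase p) f (a := r) (by simp; omega)]
  ring

def aInv (M : ℕ) (w : Equiv.Perm ℕ) : ℕ :=
  ∑ a ∈ range M, ∑ b ∈ range M, if a < b ∧ w b < w a then 1 else 0

theorem aInv_swap (M p r : ℕ) (hpr : p < r) (hr : r < M) (w : Equiv.Perm ℕ) (hw : w p < w r) :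
    aInv M (w * Equiv.swap p r) = aInv M w + 1 +
      2 * ((Ioo p r).filter fun e => w p < w e ∧ w e < w r).card := by
  have hc : ((Ioo p r).filter fun e => w p < w e ∧ w e < w r).card =
      ∑ e ∈ ((range M).erase p).erase r,
        if p < e ∧ e < r ∧ w p < w e ∧ w e < w r then 1 else 0 := by
    rw [Finset.card_eq_sum_ones, ← Finset.sum_filter]
    apply Finset.sum_congr _ (fun _ _ => rfl)
    ext e
    simp
    constructor
    · rintro ⟨⟨h1, h2⟩, h3, h4⟩
      refine ⟨⟨by omega, by omega, by omega⟩, h1, h2, h3, h4⟩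
    · rintro ⟨_, h1, h2, h3, h4⟩
      exact ⟨⟨h1, h2⟩, h3, h4⟩
  rw [hc]
  set w' := w * Equiv.swap p r with hw'
  have e1 : w' p = w r := by simp [hw']
  have e2 : w' r = w p := by simp [hw']
  have e3 : ∀ a ∈ ((range M).erase p).erase r, w' a = w a := by
    intro a ha
    simp at ha
    simp [hw', Equiv.swap_apply_of_ne_of_ne ha.2.1 ha.1]
  unfold aInv
  simp only [aux_split M p r hpr hr, Finset.sum_add_distrib]
  rw [e1, e2]
  have hR : ∑ a ∈ ((range M).erase p).erase r, ∑ b ∈ ((range M).erase p).erase r,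
      (if a < b ∧ w' b < w' a then 1 else 0) =
      ∑ a ∈ ((range M).erase p).erase r, ∑ b ∈ ((range M).erase p).erase r,
      (if a < b ∧ w b < w a then 1 else 0) :=
    Finset.sum_congr rfl fun a ha => Finset.sum_congr rfl fun b hb => by rw [e3 a ha, e3 b hb]
  rw [hR]
  have hX : ∑ b ∈ ((range M).erase p).erase r, ((if p < b ∧ w' b < w r then 1 else 0)
      + (if r < b ∧ w' b < w p then 1 else 0) + (if b < p ∧ w r < w' b then 1 else 0)
      + (if b < r ∧ w p < w' b then 1 else 0)) =
      ∑ b ∈ ((range M).erase p).erase r, ((if p < b ∧ w b < w p then 1 else 0)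
      + (if r < b ∧ w b < w r then 1 else 0) + (if b < p ∧ w p < w b then 1 else 0)
      + (if b < r ∧ w r < w b then 1 else 0) +
        2 * if p < b ∧ b < r ∧ w p < w b ∧ w b < w r then 1 else 0) := by
    refine Finset.sum_congr rfl fun b hb => ?_
    rw [e3 b hb]
    simp at hb
    have h1 : w b ≠ w p := fun h => hb.2.1 (w.injective h)
    have h2 : w b ≠ w r := fun h => hb.1 (w.injective h)
    split_ifs <;> omega
  simp only [Finset.sum_add_distrib, ← Finset.mul_sum] at hX
  simp only [lt_irrefl, false_and, if_false, hpr, true_and, hw, not_lt_of_gt hw, not_lt_of_gt hpr,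
    if_true]
  omega

theorem aux_reindex (M : ℕ) (w : Equiv.Perm ℕ) (hM : ∀ a, w a < M ↔ a < M) (f : ℕ → ℕ) :
    ∑ a ∈ range M, f (w a) = ∑ a ∈ range M, f a := by
  refine Finset.sum_nbij w ?_ (w.injective.injOn) ?_ (fun _ _ => rfl)
  · intro a ha; simp at *; exact (hM a).2 ha
  · intro b hb
    simp at hb
    refine ⟨w.symm b, ?_, by simp⟩
    have := hM (w.symm b)
    simp at *
    exact this.1 hb

theorem aInv_inv (M : ℕ) (w : Equiv.Perm ℕ) (hM : ∀ a, w a < M ↔ a < M) :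
    aInv M w⁻¹ = aInv M w := by
  unfold aInv
  rw [← aux_reindex M w hM]
  rw [Finset.sum_comm]
  rw [← aux_reindex M w hM]
  refine Finset.sum_congr rfl fun a ha => Finset.sum_congr rfl fun b hb => ?_
  simp [and_comm]

structure GoodM (M : ℕ) (z : Equiv.Perm ℕ) : Prop where
  odd : M % 2 = 1
  zero : z 0 = 0
  fpf : ∀ i, 1 ≤ i → z i ≠ i
  inv : ∀ i, z (z i) = i
  tail : ∀ i, M ≤ i → z i = oneFPF i

theorem GoodM.lt {M : ℕ} {z : Equiv.Perm ℕ} (h : GoodM M z) (a : ℕ) : z a < M ↔ a < M := by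
  have hge : ∀ a, M ≤ a → M ≤ z a := by
    intro a ha
    rw [h.tail a ha]
    have := h.odd
    unfold oneFPF
    split_ifs <;> omega
  constructor
  · intro h1
    by_contra h2
    have := hge a (by omega)
    omega
  · intro h1
    by_contra h2
    have := hge (z a) (by omega)
    rw [h.inv] at this
    omega

theorem GoodM.ell {M : ℕ} {z : Equiv.Perm ℕ} (h : GoodM M z) :
    2 * aInv M z + 1 = 4 * ellFpf z + M := by
  have hD : Dss z = (((range M) ×ˢ (range M)).filter
      fun x : ℕ × ℕ => x.2 < x.1 ∧ x.1 < z x.2 ∧ x.2 < z x.1 : Finset (ℕ × ℕ)) := by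
    ext ⟨i, j⟩
    simp [Dss]
    constructor
    · rintro ⟨h1, h2, h3, h4⟩
      have : j < M := by
        by_contra hj
        rw [h.tail j (by omega)] at h4
        unfold oneFPF at h4
        split_ifs at h4 <;> omega
      have := (h.lt j).2 this
      refine ⟨⟨by omega, by omega⟩, h3, h4, h2⟩
    · rintro ⟨_, h1, h2, h3⟩
      refine ⟨?_, h3, h1, h2⟩
      rcases Nat.eq_zero_or_pos j with h0 | h0
      · subst h0; rw [h.zero] at h2; omega
      · exact h0
  have hell : ellFpf z = ∑ i ∈ range M, ∑ j ∈ range M,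
      if j < i ∧ i < z j ∧ j < z i then 1 else 0 := by
    unfold ellFpf
    rw [hD, Set.ncard_coe_finset, Finset.card_eq_sum_ones, Finset.sum_filter,
      Finset.sum_product]
  have hell' : ellFpf z = ∑ i ∈ range M, ∑ j ∈ range M,
      if i < j ∧ i < z j ∧ j < z i then 1 else 0 := by
    rw [hell, Finset.sum_comm]
    refine Finset.sum_congr rfl fun a ha => Finset.sum_congr rfl fun b hb => ?_
    congr 1
    apply propext
    tauto
  have hinv : aInv M z = ∑ i ∈ range M, ∑ j ∈ range M, if i < z j ∧ j < z i then 1 else 0 := by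
    unfold aInv
    refine Finset.sum_congr rfl fun a ha => ?_
    rw [← aux_reindex M z h.lt]
    refine Finset.sum_congr rfl fun b hb => ?_
    rw [h.inv]
  have hc1 : ∑ i ∈ range M, (if i < z i then 1 else 0) =
      ∑ i ∈ range M, (if z i < i then 1 else 0) := by
    rw [← aux_reindex M z h.lt]
    refine Finset.sum_congr rfl fun b hb => ?_
    rw [h.inv]
  have hc2 : ∑ i ∈ range M, ((if i < z i then 1 else 0) + (if z i < i then 1 else 0) +
      (if i = 0 then 1 else 0)) = M := by
    conv_rhs => rw [← Finset.card_range M, Finset.card_eq_sum_ones]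
    refine Finset.sum_congr rfl fun i hi => ?_
    rcases Nat.eq_zero_or_pos i with h0 | h0
    · subst h0; simp [h.zero]
    · have := h.fpf i h0
      split_ifs <;> omega
  have hM := h.odd
  have hc3 : ∑ i ∈ range M, (if i = 0 then 1 else 0) = 1 := by
    rw [Finset.sum_ite_eq']
    simp; omega
  simp only [Finset.sum_add_distrib] at hc2
  have hs : ∑ i ∈ range M, ∑ j ∈ range M, (if i < z j ∧ j < z i then 1 else 0) =
    (∑ i ∈ range M, ∑ j ∈ range M, if j < i ∧ i < z j ∧ j < z i then 1 else 0) +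
    (∑ i ∈ range M, ∑ j ∈ range M, if i < j ∧ i < z j ∧ j < z i then 1 else 0) +
    ∑ i ∈ range M, (if i < z i then 1 else 0) := by
    rw [← Finset.sum_add_distrib, ← Finset.sum_add_distrib]
    refine Finset.sum_congr rfl fun i hi => ?_
    have : (if i < z i then 1 else 0) =
        ∑ j ∈ range M, if i = j then (if i < z i then 1 else 0) else 0 := by
      rw [Finset.sum_ite_eq]
      simp at hi
      simp [hi]
    rw [this, ← Finset.sum_add_distrib, ← Finset.sum_add_distrib]
    refine Finset.sum_congr rfl fun j hj => ?_
    rcases lt_trichotomy i j with h1 | h1 | h1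
    · simp [h1, not_lt_of_gt h1, h1.ne]
    · subst h1; simp
    · simp [h1, not_lt_of_gt h1, h1.ne']
  rw [← hell, ← hell', ← hinv] at hs
  omega

end

section
open Finset

theorem exists_goodM {z : Equiv.Perm ℕ} (hz : z ∈ IFPFInfty) (k : ℕ) :
    ∃ M, k < M ∧ GoodM M z := by
  obtain ⟨h0, h1, h2, N, hN⟩ := hz
  refine ⟨2 * (N + k) + 1, by omega, ⟨by omega, h0, h1, ?_, fun i hi => hN i (by omega)⟩⟩
  intro i
  rw [← Equiv.Perm.mul_apply, h2]; rfl

theorem GoodM.mem {M : ℕ} {z : Equiv.Perm ℕ} (h : GoodM M z) : z ∈ IFPFInfty :=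
  ⟨h.zero, h.fpf, Equiv.ext fun i => h.inv i, M, h.tail⟩

theorem GoodM.inv_eq {M : ℕ} {z : Equiv.Perm ℕ} (h : GoodM M z) : z⁻¹ = z := by
  have : z * z = 1 := Equiv.ext fun i => h.inv i
  exact inv_eq_of_mul_eq_one_left this

def cj (z : Equiv.Perm ℕ) (p r : ℕ) : Equiv.Perm ℕ := Equiv.swap p r * z * Equiv.swap p r

theorem GoodM.cj {M : ℕ} {z : Equiv.Perm ℕ} (h : GoodM M z) {p r : ℕ} (hp : 1 ≤ p)
    (hpr : p < r) (hr : r < M) : GoodM M (cj z p r) := by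
  refine ⟨h.odd, ?_, ?_, ?_, ?_⟩
  · have e : Equiv.swap p r 0 = 0 := Equiv.swap_apply_of_ne_of_ne (by omega) (by omega)
    simp [Paper.cj, e, h.zero]
  · intro i hi he
    have e : z (Equiv.swap p r i) = Equiv.swap p r i := by
      apply (Equiv.swap p r).injective
      simpa [Paper.cj] using he
    refine h.fpf _ ?_ e
    rw [Equiv.swap_apply_def]
    split_ifs <;> omega
  · intro i
    simp [Paper.cj, h.inv]
  · intro i hi
    have e : Equiv.swap p r i = i := Equiv.swap_apply_of_ne_of_ne (by omega) (by omega)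
    have h3 : ¬ z i < M := fun hh => absurd ((h.lt i).1 hh) (by omega)
    simp only [Paper.cj, Equiv.Perm.mul_apply, e]
    rw [Equiv.swap_apply_of_ne_of_ne (by omega) (by omega), h.tail i hi]

structure Setup (z : Equiv.Perm ℕ) (p q r : ℕ) : Prop where
  hz : z ∈ IFPFInfty
  q1 : 1 ≤ q
  qp : q < p
  pr : p < r
  zp : z p = q

theorem Setup.facts {z : Equiv.Perm ℕ} {p q r : ℕ} (h : Setup z p q r) :
    (∀ i, z (z i) = i) ∧ z q = p ∧ z r ≠ p ∧ z r ≠ r ∧ z r ≠ q ∧ z r ≠ 0 := by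
  obtain ⟨M, _, hM⟩ := exists_goodM h.hz 0
  have := h.q1
  have := h.qp
  have := h.pr
  have h1 := h.zp
  refine ⟨hM.inv, by rw [← h1, hM.inv], ?_, hM.fpf r (by omega), ?_, ?_⟩
  · intro hh
    rw [← hh, hM.inv] at h1; omega
  · intro hh
    rw [← h1] at hh
    have := z.injective hh; omega
  · intro hh
    have := hM.inv r
    rw [hh, hM.zero] at this; omega

theorem Setup.vals {z : Equiv.Perm ℕ} {p q r : ℕ} (h : Setup z p q r) :
    cj z p r p = z r ∧ cj z p r r = q ∧ cj z p r q = r ∧ cj z p r (z r) = p ∧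
    ∀ a, a ≠ p → a ≠ q → a ≠ r → a ≠ z r → cj z p r a = z a := by
  obtain ⟨h1, h2, h3, h4, h5, h6⟩ := h.facts
  have := h.q1
  have := h.qp
  have := h.pr
  have hzp := h.zp
  refine ⟨?_, ?_, ?_, ?_, ?_⟩
  · simp [cj, Equiv.swap_apply_of_ne_of_ne h3 h4]
  · simp [cj, hzp]
    exact Equiv.swap_apply_of_ne_of_ne (by omega) (by omega)
  · have e : Equiv.swap p r q = q := Equiv.swap_apply_of_ne_of_ne (by omega) (by omega)
    simp [cj, e, h2]
  · simp [cj, Equiv.swap_apply_of_ne_of_ne h3 h4, h1]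
  · intro a ap aq ar as
    have e : Equiv.swap p r a = a := Equiv.swap_apply_of_ne_of_ne ap ar
    simp only [cj, Equiv.Perm.mul_apply, e]
    refine Equiv.swap_apply_of_ne_of_ne ?_ ?_
    · intro hh; apply aq; rw [← hzp, ← hh, h1]
    · intro hh; apply as; rw [← hh, h1]

theorem cj_eq {z : Equiv.Perm ℕ} (hz : z⁻¹ = z) (p r : ℕ) :
    cj z p r = (z * Equiv.swap p r)⁻¹ * Equiv.swap p r := by
  simp [cj, hz]

theorem Setup.ell {z : Equiv.Perm ℕ} {p q r : ℕ} (h : Setup z p q r) (hs : q < z r) :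
    ellFpf (cj z p r) = ellFpf z + 1 +
      2 * ((Ioo p r).filter fun e => q < z e ∧ z e < z r).card +
      if p < z r ∧ z r < r then 1 else 0 := by
  obtain ⟨M, hMr, hM⟩ := exists_goodM h.hz r
  obtain ⟨h1, h2, h3, h4, h5, h6⟩ := h.facts
  have q1 := h.q1
  have qp := h.qp
  have pr := h.pr
  have hzp := h.zp
  have hv := hM.cj (by omega) pr hMr
  have ez := hM.ell
  have ev := hv.ell
  have hw : ∀ a, (z * Equiv.swap p r) a < M ↔ a < M := by
    intro a
    rw [Equiv.Perm.mul_apply, hM.lt, Equiv.swap_apply_def]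
    split_ifs <;> omega
  have tq : Equiv.swap p r q = q := Equiv.swap_apply_of_ne_of_ne (by omega) (by omega)
  have ts : Equiv.swap p r (z r) = z r := Equiv.swap_apply_of_ne_of_ne h3 h4
  have hwi : (z * Equiv.swap p r)⁻¹ = Equiv.swap p r * z := by simp [hM.inv_eq]
  have s1 := aInv_swap M p r pr hMr z (by omega)
  have s2 := aInv_swap M p r pr hMr (z * Equiv.swap p r)⁻¹
    (by rw [hwi]; simp [hzp, tq, ts, hs])
  rw [← cj_eq hM.inv_eq, aInv_inv M _ hw, hwi] at s2
  simp only [Equiv.Perm.mul_apply, hzp, tq, ts] at s1 s2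
  have hB : ((Ioo p r).filter fun e => q < Equiv.swap p r (z e) ∧ Equiv.swap p r (z e) < z r).card
      = ((Ioo p r).filter fun e => q < z e ∧ z e < z r).card +
        if p < z r ∧ z r < r then 1 else 0 := by
    have key : ∀ e, p < e → e < r → e ≠ z r → Equiv.swap p r (z e) = z e := by
      intro e he1 he2 he3
      refine Equiv.swap_apply_of_ne_of_ne ?_ ?_
      · intro hh; rw [← hh, h1] at hzp; omega
      · intro hh; apply he3; rw [← hh, h1]
    split_ifs with hc
    · rw [← Finset.card_insert_of_notMem (a := z r)]
      · congr 1
        ext e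
        simp only [mem_filter, mem_Ioo, mem_insert]
        constructor
        · rintro ⟨⟨a1, a2⟩, a3⟩
          by_cases he : e = z r
          · exact Or.inl he
          · rw [key e a1 a2 he] at a3
            exact Or.inr ⟨⟨a1, a2⟩, a3⟩
        · rintro (he | ⟨⟨a1, a2⟩, a3⟩)
          · subst he
            rw [h1, Equiv.swap_apply_right]
            exact ⟨hc, by omega, by omega⟩
          · by_cases he : e = z r
            · subst he; rw [h1] at a3; omega
            · rw [key e a1 a2 he]
              exact ⟨⟨a1, a2⟩, a3⟩
      · simp [h1]; omega
    · rw [add_zero]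
      congr 1
      apply Finset.filter_congr
      intro e he
      simp at he
      rw [key e he.1 he.2]
      rintro rfl; exact hc he
  rw [hB] at s2
  omega

def Rec (z : Equiv.Perm ℕ) (p q r : ℕ) : Prop :=
  q < z r ∧ ∀ e, p < e → e < r → ¬ (q < z e ∧ z e < z r)

theorem Setup.ell_iff {z : Equiv.Perm ℕ} {p q r : ℕ} (h : Setup z p q r) :
    ellFpf (cj z p r) = ellFpf z + 1 ↔ Rec z p q r ∧ ¬ (p < z r ∧ z r < r) := by
  obtain ⟨h1, h2, h3, h4, h5, h6⟩ := h.facts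
  obtain ⟨v1, v2, v3, v4, v5⟩ := h.vals
  rcases lt_or_gt_of_ne h5 with hs | hs
  · constructor
    · intro he
      exfalso
      obtain ⟨M, hMr, hM⟩ := exists_goodM h.hz r
      have q1 := h.q1
      have qp := h.qp
      have hv : Setup (cj z p r) p (z r) r := by
        refine ⟨(hM.cj (by omega) h.pr hMr).mem, by omega, by omega, h.pr, v1⟩
      have := hv.ell (by rw [v2]; exact hs)
      have e : cj (cj z p r) p r = z := by
        ext a; simp [cj]
      rw [e] at this
      omega
    · rintro ⟨⟨hh, _⟩, _⟩
      omega
  · have := h.ell hs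
    constructor
    · intro he
      have hc : ((Ioo p r).filter fun e => q < z e ∧ z e < z r).card = 0 := by omega
      refine ⟨⟨hs, ?_⟩, ?_⟩
      · intro e e1 e2 e3
        rw [Finset.card_eq_zero] at hc
        have : e ∈ ((Ioo p r).filter fun e => q < z e ∧ z e < z r) := by
          simp; exact ⟨⟨e1, e2⟩, e3⟩
        rw [hc] at this; simp at this
      · intro hh
        rw [if_pos hh] at this; omega
    · rintro ⟨⟨_, h7⟩, h8⟩
      rw [if_neg h8] at this
      have hc : ((Ioo p r).filter fun e => q < z e ∧ z e < z r).card = 0 := by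
        rw [Finset.card_eq_zero, Finset.filter_eq_empty_iff]
        intro e he
        simp at he
        exact h7 e he.1 he.2
      omega

theorem rnk_eq (w : Equiv.Perm ℕ) (i j M : ℕ) (hM : i < M) :
    rnk w i j = ∑ a ∈ range M, if (1 ≤ a ∧ a ≤ i) ∧ 1 ≤ w a ∧ w a ≤ j then 1 else 0 := by
  unfold rnk
  rw [Finset.card_eq_sum_ones, ← Finset.sum_filter]
  apply Finset.sum_congr _ (fun _ _ => rfl)
  ext a
  simp
  intros; omega

theorem rnk_inv (w : Equiv.Perm ℕ) (i j : ℕ) : rnk w⁻¹ j i = rnk w i j := by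
  unfold rnk
  refine Finset.card_nbij' (fun a => w⁻¹ a) (fun a => w a) ?_ ?_ ?_ ?_ <;> intro a <;> simp <;> tauto

theorem rnk_swap (w : Equiv.Perm ℕ) (p r : ℕ) (hp : 1 ≤ p) (hpr : p < r) (hw1 : 1 ≤ w p)
    (hw : w p < w r) (i j : ℕ) :
    rnk (w * Equiv.swap p r) i j +
      (if (p ≤ i ∧ i < r) ∧ w p ≤ j ∧ j < w r then 1 else 0) = rnk w i j := by
  rw [rnk_eq _ i j (i + r + 1) (by omega), rnk_eq _ i j (i + r + 1) (by omega)]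
  rw [aux_split _ p r hpr (by omega), aux_split _ p r hpr (by omega)]
  have e3 : ∀ a ∈ ((range (i + r + 1)).erase p).erase r, (w * Equiv.swap p r) a = w a := by
    intro a ha
    simp at ha
    simp [Equiv.swap_apply_of_ne_of_ne ha.2.1 ha.1]
  rw [Finset.sum_congr rfl (fun a ha => by rw [e3 a ha])]
  simp only [Equiv.Perm.mul_apply, Equiv.swap_apply_left, Equiv.swap_apply_right]
  split_ifs <;> omega

theorem Setup.rnk {z : Equiv.Perm ℕ} {p q r : ℕ} (h : Setup z p q r) (hs : q < z r) (i j : ℕ) :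
    rnk (cj z p r) i j + (if (p ≤ i ∧ i < r) ∧ q ≤ j ∧ j < z r then 1 else 0) +
      (if (p ≤ j ∧ j < r) ∧ q ≤ i ∧ i < z r then 1 else 0) = rnk z i j := by
  obtain ⟨M, hMr, hM⟩ := exists_goodM h.hz r
  obtain ⟨h1, h2, h3, h4, h5, h6⟩ := h.facts
  have q1 := h.q1
  have qp := h.qp
  have pr := h.pr
  have hzp := h.zp
  have hv := hM.cj (by omega) pr hMr
  have tq : Equiv.swap p r q = q := Equiv.swap_apply_of_ne_of_ne (by omega) (by omega)
  have ts : Equiv.swap p r (z r) = z r := Equiv.swap_apply_of_ne_of_ne h3 h4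
  have hwi : (z * Equiv.swap p r)⁻¹ = Equiv.swap p r * z := by simp [hM.inv_eq]
  have w1 : (z * Equiv.swap p r)⁻¹ p = q := by rw [hwi]; simp [hzp, tq]
  have w2 : (z * Equiv.swap p r)⁻¹ r = z r := by rw [hwi]; simp [ts]
  have s1 := rnk_swap z p r (by omega) pr (by omega) (by omega) i j
  have s2 := rnk_swap (z * Equiv.swap p r)⁻¹ p r (by omega) pr (by omega) (by omega) j i
  rw [← cj_eq hM.inv_eq, w1, w2, rnk_inv, ← rnk_inv, hv.inv_eq] at s2
  rw [hzp] at s1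
  omega

end

section
open Finset

theorem Setup.mem_FPFIn {z : Equiv.Perm ℕ} {p q r n : ℕ} (h : Setup z p q r) (hz : z ∈ FPFIn n)
    (hpn : p ≤ n) (hR : Rec z p q r) (hE : ¬ (p < z r ∧ z r < r)) : cj z p r ∈ FPFIn n := by
  obtain ⟨M, hMr, hM⟩ := exists_goodM h.hz r
  obtain ⟨h1, h2, h3, h4, h5, h6⟩ := h.facts
  obtain ⟨v1, v2, v3, v4, v5⟩ := h.vals
  obtain ⟨hs, hrec⟩ := hR
  have q1 := h.q1
  have qp := h.qp
  have pr := h.pr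
  have hzp := h.zp
  refine ⟨(hM.cj (by omega) pr hMr).mem, ?_⟩
  have hD : ∀ i j, n < i → 0 < j → j < i → j < z i → z j ≤ i := by
    intro i j hi hj h7 h8
    by_contra h9
    have : (i, j) ∈ Dss z := ⟨hj, h8, h7, by simpa using h9⟩
    have := hz.2 this
    simp at this
    omega
  suffices key : ∀ i j, n < i → 0 < j → j < i → j < cj z p r i → cj z p r j ≤ i by
    rintro ⟨i, j⟩ ⟨a1, a2, a3, a4⟩
    simp only at a1 a2 a3 a4
    by_cases hi : n < i
    · have := key i j hi a1 a3 a2; omega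
    · simp; omega
  intro i j hi hj hji hjv
  have zi : z i ≠ i := hM.fpf i (by omega)
  have hinj : ∀ a b, z a = z b → a = b := fun a b hh => z.injective hh
  by_cases ir : i = r
  · subst ir
    rw [v2] at hjv
    rw [v5 j (by omega) (by omega) (by omega) (by omega)]
    exact hD i j hi hj hji (by omega)
  by_cases is : i = z r
  · subst is
    rw [v4] at hjv
    by_cases jq : j = q
    · subst jq; rw [v3]; omega
    rw [v5 j (by omega) (by omega) (by omega) (by omega)]
    exact hD _ j hi hj hji (by rw [h1]; omega)
  rw [v5 i (by omega) (by omega) ir is] at hjv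
  have zir : z i ≠ z r := fun hh => ir (hinj _ _ hh)
  by_cases jq : j = q
  · subst jq
    rw [v3]
    by_contra hlt
    have b1 := hrec i (by omega) (by omega)
    by_cases hsi : z r < i
    · have := hD i (z r) hi (by omega) hsi (by omega)
      rw [h1] at this; omega
    · have := hD r i (by omega) (by omega) (by omega) (by omega)
      omega
  by_cases jr : j = r
  · subst jr; rw [v2]; omega
  by_cases jp : j = p
  · subst jp
    rw [v1]
    by_contra hlt
    by_cases hri : r < i
    · have b1 : z i ≤ r := by
        by_contra hh
        have := hD i r hi (by omega) hri (by omega)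
        omega
      have b2 : z i ≠ r := by
        intro hh; rw [← hh, h1] at is; omega
      have := hrec (z i) hjv (by omega)
      rw [h1] at this; omega
    · have b1 := hrec i (by omega) (by omega)
      have := hD r i (by omega) (by omega) (by omega) (by omega)
      omega
  by_cases js : j = z r
  · subst js; rw [v4]; omega
  rw [v5 j jp jq jr js]
  exact hD i j hi hj hji hjv

/-- antidiagonal chains -/
def IsAnti (C : Finset (ℕ × ℕ)) : Prop :=
  ∀ x ∈ C, ∀ y ∈ C, x ≠ y → (x.1 < y.1 ∧ y.2 < x.2) ∨ (y.1 < x.1 ∧ x.2 < y.2)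

structure Chain (S : ℕ → ℕ → Prop) (i j : ℕ) (C : Finset (ℕ × ℕ)) : Prop where
  mem : ∀ x ∈ C, S x.1 x.2 ∧ x.1 ≤ i ∧ x.2 ≤ j
  anti : IsAnti C

theorem Chain.mono {S : ℕ → ℕ → Prop} {i j : ℕ} {C D : Finset (ℕ × ℕ)} (h : Chain S i j C)
    (hD : D ⊆ C) : Chain S i j D :=
  ⟨fun x hx => h.mem x (hD hx), fun x hx y hy => h.anti x (hD hx) y (hD hy)⟩

theorem Chain.transpose {S : ℕ → ℕ → Prop} (hS : ∀ a b, S a b → S b a) {i j : ℕ}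
    {C : Finset (ℕ × ℕ)} (h : Chain S i j C) : Chain S j i (C.image Prod.swap) ∧
      (C.image Prod.swap).card = C.card := by
  refine ⟨⟨?_, ?_⟩, Finset.card_image_of_injective _ Prod.swap_injective⟩
  · intro x hx
    obtain ⟨y, hy, rfl⟩ := Finset.mem_image.1 hx
    obtain ⟨h1, h2, h3⟩ := h.mem y hy
    exact ⟨hS _ _ h1, h3, h2⟩
  · intro x hx y hy hxy
    obtain ⟨x, hx', rfl⟩ := Finset.mem_image.1 hx
    obtain ⟨y, hy', rfl⟩ := Finset.mem_image.1 hy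
    have := h.anti x hx' y hy' (fun hh => hxy (by rw [hh]))
    simp only [Prod.fst_swap, Prod.snd_swap]
    omega

theorem Chain.cross {S : ℕ → ℕ → Prop} (hS1 : ∀ a b, S a b → 1 ≤ a) {i j i' j' : ℕ} {C C' : Finset (ℕ × ℕ)}
    (h : Chain S i j C) (h' : Chain S i' j' C') (hi : i ≤ i') (hj : j' ≤ j) :
    ∃ D D', Chain S i j' D ∧ Chain S i' j D' ∧ D.card + D'.card = C.card + C'.card := by
  classical
  let Q : ℕ → Prop := fun a => ∀ x ∈ C, a < x.1 →
    x.2 ≤ j' ∧ ∀ y ∈ C', y.1 ≤ a → x.2 < y.2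
  have hQ : ∃ a, Q a := ⟨i, fun x hx hlt => by have := (h.mem x hx).2.1; omega⟩
  have hQi : Nat.find hQ ≤ i :=
    Nat.find_min' hQ (fun x hx hlt => by have := (h.mem x hx).2.1; omega)
  have ha := Nat.find_spec hQ
  have hmin := fun m (hm : m < Nat.find hQ) => Nat.find_min hQ hm
  generalize Nat.find hQ = a at hQi ha hmin
  have hpos : ∀ x ∈ C, x.1 ≤ a → ∀ y ∈ C', a < y.1 → y.2 < x.2 := by
    intro x hx hxa y hy hya
    rcases Nat.eq_zero_or_pos a with h0 | h0
    · have := hS1 _ _ (h.mem x hx).1; omega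
    have h2 := hmin (a - 1) (by omega)
    simp only [Q, not_forall] at h2
    obtain ⟨x0, hx0, hx0a, h3⟩ := h2
    have h4 : y.2 < x0.2 := by
      by_contra h5
      apply h3
      have h6 := (h'.mem y hy).2.2
      refine ⟨by omega, ?_⟩
      intro y0 hy0 hy0a
      have : y0 ≠ y := by rintro rfl; omega
      have := h'.anti y0 hy0 y hy this
      omega
    by_cases hxx : x = x0
    · subst hxx; exact h4
    · have := h.anti x hx x0 hx0 hxx
      omega
  refine ⟨C'.filter (fun y => y.1 ≤ a) ∪ C.filter (fun x => a < x.1),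
    C.filter (fun x => x.1 ≤ a) ∪ C'.filter (fun y => a < y.1), ⟨?_, ?_⟩, ⟨?_, ?_⟩, ?_⟩
  · intro x hx
    simp only [mem_union, mem_filter] at hx
    rcases hx with ⟨hx, hxa⟩ | ⟨hx, hxa⟩
    · obtain ⟨m1, m2, m3⟩ := h'.mem x hx
      exact ⟨m1, by omega, m3⟩
    · obtain ⟨m1, m2, m3⟩ := h.mem x hx
      exact ⟨m1, by omega, (ha x hx hxa).1⟩
  · intro x hx y hy hxy
    simp only [mem_union, mem_filter] at hx hy
    rcases hx with ⟨hx, hxa⟩ | ⟨hx, hxa⟩ <;> rcases hy with ⟨hy, hya⟩ | ⟨hy, hya⟩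
    · exact h'.anti x hx y hy hxy
    · left; exact ⟨by omega, (ha y hy hya).2 x hx hxa⟩
    · right; exact ⟨by omega, (ha x hx hxa).2 y hy hya⟩
    · exact h.anti x hx y hy hxy
  · intro x hx
    simp only [mem_union, mem_filter] at hx
    rcases hx with ⟨hx, hxa⟩ | ⟨hx, hxa⟩
    · obtain ⟨m1, m2, m3⟩ := h.mem x hx
      exact ⟨m1, by omega, m3⟩
    · obtain ⟨m1, m2, m3⟩ := h'.mem x hx
      exact ⟨m1, by omega, by omega⟩
  · intro x hx y hy hxy
    simp only [mem_union, mem_filter] at hx hy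
    rcases hx with ⟨hx, hxa⟩ | ⟨hx, hxa⟩ <;> rcases hy with ⟨hy, hya⟩ | ⟨hy, hya⟩
    · exact h.anti x hx y hy hxy
    · left; exact ⟨by omega, hpos x hx hxa y hy hya⟩
    · right; exact ⟨by omega, hpos y hy hya x hx hxa⟩
    · exact h'.anti x hx y hy hxy
  · rw [Finset.card_union_of_disjoint, Finset.card_union_of_disjoint]
    · have e1 := Finset.card_filter_add_card_filter_not (s := C) (fun x : ℕ × ℕ => x.1 ≤ a)
      have e2 := Finset.card_filter_add_card_filter_not (s := C') (fun x : ℕ × ℕ => x.1 ≤ a)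
      simp only [not_le] at e1 e2
      omega
    · rw [Finset.disjoint_left]
      intro x hx hy
      simp only [mem_filter] at hx hy
      omega
    · rw [Finset.disjoint_left]
      intro x hx hy
      simp only [mem_filter] at hx hy
      omega

end

section
open Finset

theorem Chain.half {S : ℕ → ℕ → Prop} (hS : ∀ a b, S a b → S b a) {i : ℕ}
    {C : Finset (ℕ × ℕ)} (h : Chain S i i C) (hU : ∀ x ∈ C, x.1 < x.2) :
    ∃ D, Chain S i i D ∧ D.card = 2 * C.card := by
  obtain ⟨ht, htc⟩ := h.transpose hS
  refine ⟨C ∪ C.image Prod.swap, ⟨?_, ?_⟩, ?_⟩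
  · intro x hx
    rcases Finset.mem_union.1 hx with hx | hx
    · exact h.mem x hx
    · exact ht.mem x hx
  · have key : ∀ x ∈ C, ∀ y ∈ C, x.1 < y.2 ∧ y.1 < x.2 := by
      intro x hx y hy
      have h1 := hU x hx
      have h2 := hU y hy
      by_cases hxy : x = y
      · subst hxy; exact ⟨h1, h1⟩
      · have := h.anti x hx y hy hxy
        omega
    intro x hx y hy hxy
    rcases Finset.mem_union.1 hx with hx | hx <;> rcases Finset.mem_union.1 hy with hy | hy
    · exact h.anti x hx y hy hxy
    · obtain ⟨y, hy', rfl⟩ := Finset.mem_image.1 hy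
      exact Or.inl (key x hx y hy')
    · obtain ⟨x, hx', rfl⟩ := Finset.mem_image.1 hx
      exact Or.inr (key y hy x hx')
    · exact ht.anti x hx y hy hxy
  · rw [Finset.card_union_of_disjoint, htc]
    · ring
    · rw [Finset.disjoint_left]
      intro x hx hy
      obtain ⟨y, hy', rfl⟩ := Finset.mem_image.1 hy
      have h1 := hU _ hx
      have h2 := hU _ hy'
      simp at h1
      omega

theorem Chain.even {S : ℕ → ℕ → Prop} (hS : ∀ a b, S a b → S b a) (hir : ∀ a, ¬ S a a) {i : ℕ}
    {C : Finset (ℕ × ℕ)} (h : Chain S i i C) :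
    ∃ D, Chain S i i D ∧ C.card ≤ D.card ∧ D.card % 2 = 0 := by
  classical
  have e1 := Finset.card_filter_add_card_filter_not (s := C) (fun x : ℕ × ℕ => x.1 < x.2)
  by_cases hc : C.card ≤ 2 * (C.filter fun x => x.1 < x.2).card
  · obtain ⟨D, hD, hDc⟩ := (h.mono (Finset.filter_subset (fun x => x.1 < x.2) C)).half hS
      (by intro x hx; exact (Finset.mem_filter.1 hx).2)
    exact ⟨D, hD, by omega, by omega⟩
  · have h2 := h.mono (Finset.filter_subset (fun x => ¬ x.1 < x.2) C)
    obtain ⟨h3, h4⟩ := h2.transpose hS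
    obtain ⟨D, hD, hDc⟩ := h3.half hS (by
      intro x hx
      obtain ⟨y, hy, rfl⟩ := Finset.mem_image.1 hx
      obtain ⟨hy1, hy2⟩ := Finset.mem_filter.1 hy
      have := (h.mem y hy1).1
      have : y.1 ≠ y.2 := fun hh => hir _ (hh ▸ this)
      simp
      omega)
    exact ⟨D, hD, by omega, by omega⟩

theorem rnk_even {M : ℕ} {z : Equiv.Perm ℕ} (hM : GoodM M z) (i : ℕ) : rnk z i i % 2 = 0 := by
  unfold rnk
  set T := (Finset.Icc 1 i).filter fun a => z a ∈ Finset.Icc 1 i with hT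
  have e1 := Finset.card_filter_add_card_filter_not (s := T) (fun x : ℕ => x < z x)
  have e2 : (T.filter fun x => x < z x).card = (T.filter fun x => ¬ x < z x).card := by
    refine Finset.card_nbij' (fun a => z a) (fun a => z a) ?_ ?_ ?_ ?_
    · intro a
      simp [hT, hM.inv]
      intros; omega
    · intro a
      simp [hT, hM.inv]
      intro h1 h2 h3 h4 h5
      have := hM.fpf a h1
      omega
    · intro a _; exact hM.inv a
    · intro a _; exact hM.inv a
  omega

theorem rnk_row (w : Equiv.Perm ℕ) {i i' : ℕ} (hi : i ≤ i') (j : ℕ) :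
    rnk w i' j = rnk w i j + ((Ioc i i').filter fun a => w a ∈ Icc 1 j).card := by
  unfold rnk
  rw [← Finset.card_union_of_disjoint, ← Finset.filter_union]
  · congr 2
    ext a; simp; omega
  · rw [Finset.disjoint_left]
    intro a ha hb
    simp at ha hb
    omega

theorem rnk_rect (w : Equiv.Perm ℕ) {i i' j j' : ℕ} (hi : i ≤ i') (hj : j' ≤ j)
    (hno : ∀ e, i < e → e ≤ i' → ¬ (j' < w e ∧ w e ≤ j)) :
    rnk w i j + rnk w i' j' = rnk w i j' + rnk w i' j := by
  rw [rnk_row w hi j, rnk_row w hi j']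
  have : ((Ioc i i').filter fun a => w a ∈ Icc 1 j) = ((Ioc i i').filter fun a => w a ∈ Icc 1 j') := by
    apply Finset.filter_congr
    intro a ha
    simp at ha
    have := hno a ha.1 ha.2
    simp
    omega
  rw [this]; omega

def Bad (S : ℕ → ℕ → Prop) (n : ℕ) (w : Equiv.Perm ℕ) : Prop :=
  ∃ i j C, 1 ≤ j ∧ j ≤ i ∧ i ≤ n ∧ Chain S i j C ∧ C.card = rnk w i j + 1

structure Ctx (z : Equiv.Perm ℕ) (p q n : ℕ) (S : ℕ → ℕ → Prop) : Prop where
  hz : z ∈ IFPFInfty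
  q1 : 1 ≤ q
  qp : q < p
  pn : p ≤ n
  zp : z p = q
  za : ∀ a, 1 ≤ a → a < p → q < z a
  symm : ∀ a b, S a b → S b a
  irr : ∀ a, ¬ S a a
  pos : ∀ a b, S a b → 1 ≤ a

def Tight (z : Equiv.Perm ℕ) (S : ℕ → ℕ → Prop) (i j : ℕ) : Prop :=
  ∃ C, Chain S i j C ∧ C.card = rnk z i j

variable {z : Equiv.Perm ℕ} {p q n : ℕ} {S : ℕ → ℕ → Prop}

theorem Ctx.rsymm (h : Ctx z p q n S) (i j : ℕ) : rnk z i j = rnk z j i := by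
  obtain ⟨M, _, hM⟩ := exists_goodM h.hz 0
  rw [← rnk_inv, hM.inv_eq]

theorem Ctx.tsymm (h : Ctx z p q n S) {i j : ℕ} (ht : Tight z S i j) : Tight z S j i := by
  obtain ⟨C, hC, hc⟩ := ht
  obtain ⟨h1, h2⟩ := hC.transpose h.symm
  exact ⟨_, h1, by rw [h2, hc, h.rsymm]⟩

theorem Ctx.le (h : Ctx z p q n S) (hnb : ¬ Bad S n z) {i j : ℕ} (hi1 : 1 ≤ i) (hj1 : 1 ≤ j)
    (hi : i ≤ n) (hj : j ≤ n)
    {C : Finset (ℕ × ℕ)} (hC : Chain S i j C) : C.card ≤ rnk z i j := by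
  by_contra hlt
  apply hnb
  rcases le_total j i with hji | hij
  · obtain ⟨D, hD, hDc⟩ := Finset.exists_subset_card_eq (s := C) (n := rnk z i j + 1) (by omega)
    exact ⟨i, j, D, hj1, hji, hi, hC.mono hD, hDc⟩
  · obtain ⟨h1, h2⟩ := hC.transpose h.symm
    have := h.rsymm i j
    obtain ⟨D, hD, hDc⟩ := Finset.exists_subset_card_eq (s := C.image Prod.swap)
      (n := rnk z j i + 1) (by omega)
    exact ⟨j, i, D, hi1, hij, hj, h1.mono hD, hDc⟩

/-- Main step A -/
theorem Ctx.tightA (h : Ctx z p q n S) (hnb : ¬ Bad S n z) {r : ℕ} (pr : p < r)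
    (hR : Rec z p q r) (hE : ¬ (p < z r ∧ z r < r)) (hb : Bad S n (cj z p r)) :
    ∃ i j, p ≤ i ∧ i < r ∧ q ≤ j ∧ j < z r ∧ i ≤ n ∧ j ≤ n ∧ Tight z S i j := by
  have hst : Setup z p q r := ⟨h.hz, h.q1, h.qp, pr, h.zp⟩
  obtain ⟨M, _, hM⟩ := exists_goodM h.hz 0
  obtain ⟨h1, h2, h3, h4, h5, h6⟩ := hst.facts
  obtain ⟨hs, hrec⟩ := hR
  have q1 := h.q1
  have qp := h.qp
  obtain ⟨i, j, C, hj1, hji, hi, hC, hc⟩ := hb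
  have hr := hst.rnk hs i j
  have hle := h.le hnb (by omega) hj1 hi (by omega) hC
  by_cases c1 : (p ≤ i ∧ i < r) ∧ q ≤ j ∧ j < z r
  · by_cases c2 : (p ≤ j ∧ j < r) ∧ q ≤ i ∧ i < z r
    · rw [if_pos c1, if_pos c2] at hr
      obtain ⟨hT, hTc⟩ := hC.transpose h.symm
      obtain ⟨D, D', hD, hD', hDD⟩ := hT.cross h.pos hC hji hji
      have hrect : rnk z j i + rnk z i j = rnk z j j + rnk z i i := by
        apply rnk_rect z hji hji
        intro e e1 e2 e3
        exact hrec e (by omega) (by omega) (by omega)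
      have hsy := h.rsymm i j
      have l1 := h.le hnb hj1 hj1 (by omega) (by omega) hD
      have l2 := h.le hnb (by omega) (by omega) hi hi hD'
      have ev := rnk_even hM j
      have rs : r < z r := by omega
      by_cases t2 : D'.card = rnk z i i
      · exact ⟨i, i, by omega, by omega, by omega, by omega, hi, hi, D', hD', t2⟩
      · obtain ⟨E, hE1, hE2, hE3⟩ := hD.even h.symm h.irr
        have l3 := h.le hnb hj1 hj1 (by omega) (by omega) hE1
        exact ⟨j, j, by omega, by omega, by omega, by omega, by omega, by omega, E, hE1, by omega⟩
    · rw [if_pos c1, if_neg c2] at hr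
      exact ⟨i, j, by omega, by omega, by omega, by omega, hi, by omega, C, hC, by omega⟩
  · rw [if_neg c1] at hr
    by_cases c2 : (p ≤ j ∧ j < r) ∧ q ≤ i ∧ i < z r
    · rw [if_pos c2] at hr
      exact ⟨j, i, by omega, by omega, by omega, by omega, by omega, by omega,
        h.tsymm ⟨C, hC, by omega⟩⟩
    · rw [if_neg c2] at hr
      omega

theorem Ctx.tightB (h : Ctx z p q n S) (hnb : ¬ Bad S n z)
    (hb : ∀ r, p < r → Rec z p q r → ¬ (p < z r ∧ z r < r) → Bad S n (cj z p r))
    {r : ℕ} (pr : p < r) (hR : Rec z p q r) :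
    ∃ i j, p ≤ i ∧ i < r ∧ q ≤ j ∧ j < z r ∧ i ≤ n ∧ j ≤ n ∧ Tight z S i j := by
  by_cases hE : p < z r ∧ z r < r
  · have hst : Setup z p q r := ⟨h.hz, h.q1, h.qp, pr, h.zp⟩
    obtain ⟨h1, h2, h3, h4, h5, h6⟩ := hst.facts
    have qp := h.qp
    have hR' : Rec z p q (z r) := by
      refine ⟨by rw [h1]; omega, ?_⟩
      intro e e1 e2 e3
      rw [h1] at e3
      have b1 := hR.2 e e1 (by omega)
      have b2 : z e ≠ z r := fun hh => by have := z.injective hh; omega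
      have b3 := hR.2 (z e) (by omega) (by omega)
      rw [h1] at b3
      omega
    have hE' : ¬ (p < z (z r) ∧ z (z r) < z r) := by rw [h1]; omega
    obtain ⟨i, j, a1, a2, a3, a4, a5, a6, ht⟩ := h.tightA hnb hE.1 hR' hE' (hb _ hE.1 hR' hE')
    rw [h1] at a4
    by_cases hj : p ≤ j
    · exact ⟨j, i, by omega, by omega, by omega, by omega, a6, a5, h.tsymm ht⟩
    · exact ⟨i, j, by omega, by omega, by omega, by omega, a5, a6, ht⟩
  · exact h.tightA hnb pr hR hE (hb r pr hR hE)

theorem Ctx.main (h : Ctx z p q n S) (hnb : ¬ Bad S n z)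
    (hb : ∀ r, p < r → Rec z p q r → ¬ (p < z r ∧ z r < r) → Bad S n (cj z p r)) : S p q := by
  classical
  by_contra hpq
  obtain ⟨M, hMp, hM⟩ := exists_goodM h.hz (p + 1)
  have q1 := h.q1
  have qp := h.qp
  have pn := h.pn
  have hinj : ∀ a b, z a = z b → a = b := fun a b hh => z.injective hh
  have hex : ∃ e, p < e ∧ q < z e := by
    refine ⟨M + 1, by omega, ?_⟩
    have : ¬ z (M + 1) < M := by rw [hM.lt]; omega
    omega
  -- the set of good j
  let P : ℕ → Prop := fun j => ∃ i, p ≤ i ∧ i ≤ n ∧ q ≤ j ∧ j ≤ n ∧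
    (∀ e, p < e → e ≤ i → ¬ q < z e) ∧ Tight z S i j
  have hP : ∃ j, P j := by
    have hs := Nat.find_spec hex
    have hmin := fun m (hm : m < Nat.find hex) => Nat.find_min hex hm
    generalize Nat.find hex = r at hs hmin
    obtain ⟨i, j, a1, a2, a3, a4, a5, a6, ht⟩ := h.tightB hnb hb hs.1
      ⟨hs.2, fun e e1 e2 e3 => hmin e e2 ⟨e1, e3.1⟩⟩
    exact ⟨j, i, a1, a5, a3, a6, fun e e1 e2 e3 => hmin e (by omega) ⟨e1, e3⟩, ht⟩
  have hs := Nat.find_spec hP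
  have hmin := fun m (hm : m < Nat.find hP) => Nat.find_min hP hm
  generalize Nat.find hP = j at hs hmin
  obtain ⟨i, pi, hin, qj, jn, hrow, ht⟩ := hs
  have hcol : ∀ e, p < e → ¬ (q < z e ∧ z e ≤ j) := by
    by_contra hcon
    push Not at hcon
    have hs := Nat.find_spec hcon
    have hmin2 := fun m (hm : m < Nat.find hcon) => Nat.find_min hcon hm
    generalize Nat.find hcon = e at hs hmin2
    obtain ⟨i', j', a1, a2, a3, a4, a5, a6, ht'⟩ := h.tightB hnb hb hs.1
      ⟨hs.2.1, fun f f1 f2 f3 => hmin2 f f2 ⟨f1, f3.1, by omega⟩⟩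
    by_cases hii : i' ≤ i
    · exact hmin j' (by omega) ⟨i', a1, a5, a3, a6, fun f f1 f2 => hrow f f1 (by omega), ht'⟩
    · obtain ⟨C, hC, hc⟩ := ht
      obtain ⟨C', hC', hc'⟩ := ht'
      obtain ⟨D, D', hD, hD', hDD⟩ := hC.cross h.pos hC' (by omega) (by omega)
      have hrect : rnk z i j + rnk z i' j' = rnk z i j' + rnk z i' j := by
        apply rnk_rect z (by omega) (by omega)
        intro f f1 f2 f3
        exact hmin2 f (by omega) ⟨by omega, by omega, by omega⟩
      have l1 := h.le hnb (by omega) (by omega) hin a6 hD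
      have l2 := h.le hnb (by omega) (by omega) a5 jn hD'
      exact hmin j' (by omega) ⟨i, pi, hin, a3, a6, hrow, D, hD, by omega⟩
  -- final count
  obtain ⟨C, hC, hc⟩ := ht
  have hempty : ∀ x ∈ C, p < x.1 ∨ q < x.2 := by
    intro x hx
    by_contra hcon
    push Not at hcon
    obtain ⟨m1, m2, m3⟩ := hC.mem x hx
    have x1 := h.pos _ _ m1
    have x2 := h.pos _ _ (h.symm _ _ m1)
    have hch : Chain S x.1 x.2 {x} := by
      refine ⟨?_, ?_⟩
      · intro y hy
        rw [Finset.mem_singleton] at hy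
        subst hy
        exact ⟨m1, le_refl _, le_refl _⟩
      · intro y hy y' hy' hne
        rw [Finset.mem_singleton] at hy hy'
        exact absurd (hy.trans hy'.symm) hne
    have l1 := h.le hnb x1 x2 (by omega) (by omega) hch
    rw [Finset.card_singleton] at l1
    unfold rnk at l1
    obtain ⟨a, ha⟩ := Finset.card_pos.1 l1
    simp at ha
    by_cases hap : a = p
    · have e1 : x.1 = p := by omega
      have e2 : x.2 = q := by
        have := h.zp
        subst hap; omega
      rw [e1, e2] at m1
      exact hpq m1
    · have := h.za a (by omega) (by omega)
      omega
  have up : C.card ≤ (i - p) + (j - q) := by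
    have e1 := Finset.card_filter_add_card_filter_not (s := C) (fun x : ℕ × ℕ => p < x.1)
    have e2 : (C.filter fun x => p < x.1).card ≤ (Ioc p i).card := by
      apply Finset.card_le_card_of_injOn (fun x => x.1)
      · intro x hx
        simp at hx
        have := (hC.mem x hx.1).2.1
        simp; omega
      · intro x hx y hy hxy
        simp at hx hy hxy
        by_contra hne
        have := hC.anti x hx.1 y hy.1 hne
        omega
    have e3 : (C.filter fun x => ¬ p < x.1).card ≤ (Ioc q j).card := by
      apply Finset.card_le_card_of_injOn (fun x => x.2)
      · intro x hx
        simp at hx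
        have := (hC.mem x hx.1).2.2
        have := hempty x hx.1
        simp; omega
      · intro x hx y hy hxy
        simp at hx hy hxy
        by_contra hne
        have := hC.anti x hx.1 y hy.1 hne
        omega
    simp only [Nat.card_Ioc] at e2 e3
    omega
  have zne : ∀ e, 1 ≤ e → 1 ≤ z e := by
    intro e he
    by_contra hh
    have h0 : z e = 0 := by omega
    have := hM.inv e
    rw [h0, hM.zero] at this; omega
  have low : (i - p) + (j - q) + 1 ≤ rnk z i j := by
    have hsub : insert p (Ioc p i ∪ (Ioc q j).image z) ⊆
        (Finset.Icc 1 i).filter fun a => z a ∈ Finset.Icc 1 j := by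
      intro a ha
      simp only [mem_insert, mem_union, mem_Ioc, mem_image] at ha
      simp only [mem_filter, mem_Icc]
      have zp := h.zp
      rcases ha with rfl | ha | ⟨b, hb, rfl⟩
      · omega
      · have := hrow a ha.1 ha.2
        have := zne a (by omega)
        omega
      · have := hcol (z b)
        rw [hM.inv] at this ⊢
        have := zne b (by omega)
        omega
    have hd : ∀ b, q < b → b ≤ j → z b < p := by
      intro b b1 b2
      have h7 := hcol (z b)
      rw [hM.inv] at h7
      have : z b ≠ p := by
        intro hh
        have := hM.inv b
        rw [hh, h.zp] at this; omega
      omega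
    have := Finset.card_le_card hsub
    rw [Finset.card_insert_of_notMem, Finset.card_union_of_disjoint,
      Finset.card_image_of_injective _ z.injective, Nat.card_Ioc, Nat.card_Ioc] at this
    · exact this
    · rw [Finset.disjoint_left]
      intro a ha hb
      simp only [mem_Ioc, mem_image] at ha hb
      obtain ⟨b, hb, rfl⟩ := hb
      have := hd b hb.1 hb.2
      omega
    · simp only [mem_union, mem_Ioc, mem_image, not_or, not_exists, not_and]
      refine ⟨by omega, ?_⟩
      intro b hb
      have := hd b hb.1 hb.2
      omega
  omega

end

section
open Finset

/-- Symmetrised support of a monomial, 1-indexed. -/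
def SM {n : ℕ} (m : SSVar n →₀ ℕ) (a b : ℕ) : Prop :=
  ∃ v ∈ m.support, ((v.1.1 : ℕ) + 1 = a ∧ (v.1.2 : ℕ) + 1 = b) ∨
    ((v.1.2 : ℕ) + 1 = a ∧ (v.1.1 : ℕ) + 1 = b)

def Fset {n : ℕ} (A B : Finset (Fin n)) (h : A.card = B.card) : Finset (SSVar n) :=
  Finset.univ.filter (fun v : SSVar n => ∃ t : Fin A.card,
          (A.orderEmbOfFin rfl t = v.1.1 ∧ B.orderEmbOfFin h.symm t.rev = v.1.2) ∨
          (A.orderEmbOfFin rfl t = v.1.2 ∧ B.orderEmbOfFin h.symm t.rev = v.1.1))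

theorem prod_X_eq {K σ : Type*} [CommRing K] [DecidableEq σ] (F : Finset σ) :
    ∏ v ∈ F, (MvPolynomial.X v : MvPolynomial σ K) =
      MvPolynomial.monomial (∑ v ∈ F, Finsupp.single v 1) 1 := by
  rw [MvPolynomial.monomial_sum_one]
  rfl

theorem sum_single_le {σ : Type*} [DecidableEq σ] (F : Finset σ) (m : σ →₀ ℕ) :
    ∑ v ∈ F, Finsupp.single v 1 ≤ m ↔ F ⊆ m.support := by
  have : ∀ w, (∑ v ∈ F, Finsupp.single v 1 : σ →₀ ℕ) w = if w ∈ F then 1 else 0 := by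
    intro w
    rw [Finsupp.finsetSum_apply]
    simp [Finsupp.single_apply]
  rw [Finsupp.le_def]
  simp only [this]
  constructor
  · intro h w hw
    have := h w
    rw [if_pos hw] at this
    simp; omega
  · intro h w
    split_ifs with hw
    · have := h hw
      simp at this; omega
    · omega

def Tset (n : ℕ) (w : Equiv.Perm ℕ) : Set (SSVar n →₀ ℕ) :=
  {s | ∃ (i j : ℕ) (A B : Finset (Fin n)) (h : A.card = B.card),
    1 ≤ j ∧ j ≤ i ∧ i ≤ n ∧
    (∀ a ∈ A, (a : ℕ) + 1 ≤ i) ∧ (∀ b ∈ B, (b : ℕ) + 1 ≤ j) ∧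
    A.card = rnk w i j + 1 ∧
    (¬ ∃ t : Fin A.card, (A.orderEmbOfFin rfl t : Fin n) = B.orderEmbOfFin h.symm t.rev) ∧
    s = ∑ v ∈ Fset A B h, Finsupp.single v 1}

theorem Jss_eq (K : Type*) [CommRing K] (n : ℕ) (w : Equiv.Perm ℕ) :
    JssIdeal K n w = Ideal.span ((fun s => MvPolynomial.monomial s (1 : K)) '' Tset n w) := by
  unfold JssIdeal JssIdealOfTable
  apply le_antisymm
  · rw [Ideal.span_le]
    rintro g ⟨i, j, A, B, h1, h2, h3, h4, h5, h6, h7, rfl⟩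
    unfold ussMon
    have hAB : A.card = B.card := by omega
    rw [dif_pos hAB]
    split_ifs with hd
    · exact Ideal.zero_mem _
    · apply Ideal.subset_span
      refine ⟨_, ⟨i, j, A, B, hAB, h1, h2, h3, h4, h5, h6, hd, rfl⟩, ?_⟩
      exact (prod_X_eq _).symm
  · rw [Ideal.span_le]
    rintro g ⟨s, ⟨i, j, A, B, hAB, h1, h2, h3, h4, h5, h6, hd, rfl⟩, rfl⟩
    apply Ideal.subset_span
    refine ⟨i, j, A, B, h1, h2, h3, h4, h5, h6, by omega, ?_⟩
    unfold ussMon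
    rw [dif_pos hAB, if_neg hd]
    exact (prod_X_eq _).symm

theorem Tset_iff {n : ℕ} (w : Equiv.Perm ℕ) (m : SSVar n →₀ ℕ) :
    (∃ s ∈ Tset n w, s ≤ m) ↔ Bad (SM m) n w := by
  constructor
  · rintro ⟨s, ⟨i, j, A, B, hAB, h1, h2, h3, h4, h5, h6, hd, rfl⟩, hs⟩
    rw [sum_single_le] at hs
    have inj : Function.Injective fun t : Fin A.card =>
        (((A.orderEmbOfFin rfl t : Fin n) : ℕ) + 1,
          ((B.orderEmbOfFin hAB.symm t.rev : Fin n) : ℕ) + 1) := by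
      intro t t' htt
      simp only [Prod.mk.injEq, add_left_inj] at htt
      exact (A.orderEmbOfFin rfl).injective (Fin.ext htt.1)
    refine ⟨i, j, Finset.univ.image fun t : Fin A.card =>
        (((A.orderEmbOfFin rfl t : Fin n) : ℕ) + 1,
          ((B.orderEmbOfFin hAB.symm t.rev : Fin n) : ℕ) + 1), h1, h2, h3, ⟨?_, ?_⟩, ?_⟩
    · intro x hx
      obtain ⟨t, _, rfl⟩ := Finset.mem_image.1 hx
      refine ⟨?_, h4 _ (Finset.orderEmbOfFin_mem _ _ _), h5 _ (Finset.orderEmbOfFin_mem _ _ _)⟩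
      have hne : (A.orderEmbOfFin rfl t : Fin n) ≠ B.orderEmbOfFin hAB.symm t.rev :=
        fun hh => hd ⟨t, hh⟩
      rcases lt_or_gt_of_ne hne with hlt | hlt
      · refine ⟨⟨(_, _), hlt⟩, hs ?_, Or.inr ⟨rfl, rfl⟩⟩
        simp only [Fset, mem_filter, mem_univ, true_and]
        exact ⟨t, Or.inr ⟨rfl, rfl⟩⟩
      · refine ⟨⟨(_, _), hlt⟩, hs ?_, Or.inl ⟨rfl, rfl⟩⟩
        simp only [Fset, mem_filter, mem_univ, true_and]
        exact ⟨t, Or.inl ⟨rfl, rfl⟩⟩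
    · intro x hx y hy hxy
      obtain ⟨t, _, rfl⟩ := Finset.mem_image.1 hx
      obtain ⟨t', _, rfl⟩ := Finset.mem_image.1 hy
      have hne : t ≠ t' := by rintro rfl; exact hxy rfl
      simp only [add_lt_add_iff_right, Fin.val_fin_lt, OrderEmbedding.lt_iff_lt, Fin.rev_lt_rev,
        and_self]
      exact lt_or_gt_of_ne hne
    · rw [Finset.card_image_of_injective _ inj, Finset.card_univ, Fintype.card_fin, h6]
  · rintro ⟨i, j, C, h1, h2, h3, hC, hc⟩
    have hb : ∀ x ∈ C, 1 ≤ x.1 ∧ 1 ≤ x.2 ∧ x.1 ≤ n ∧ x.2 ≤ n ∧ x.1 ≠ x.2 := by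
      intro x hx
      obtain ⟨⟨v, hv, hh⟩, _, _⟩ := hC.mem x hx
      have := v.1.1.2
      have := v.1.2.2
      have h7 : (v.1.2 : ℕ) < v.1.1 := v.2
      omega
    let f : C → Fin n := fun x => ⟨x.1.1 - 1, by have := hb x.1 x.2; omega⟩
    let g : C → Fin n := fun x => ⟨x.1.2 - 1, by have := hb x.1 x.2; omega⟩
    have fval : ∀ x : C, ((f x : Fin n) : ℕ) + 1 = x.1.1 := fun x => by
      have := hb x.1 x.2; simp only [f]; omega
    have gval : ∀ x : C, ((g x : Fin n) : ℕ) + 1 = x.1.2 := fun x => by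
      have := hb x.1 x.2; simp only [g]; omega
    have finj : Function.Injective f := by
      intro x y hxy
      by_contra hne
      have := hC.anti x.1 x.2 y.1 y.2 (fun hh => hne (Subtype.ext hh))
      have := fval x; have := fval y
      rw [hxy] at *
      omega
    have ginj : Function.Injective g := by
      intro x y hxy
      by_contra hne
      have := hC.anti x.1 x.2 y.1 y.2 (fun hh => hne (Subtype.ext hh))
      have := gval x; have := gval y
      rw [hxy] at *
      omega
    have cA : (Finset.univ.image f).card = C.card := by
      rw [Finset.card_image_of_injective _ finj]; simp
    have cB : (Finset.univ.image g).card = C.card := by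
      rw [Finset.card_image_of_injective _ ginj]; simp
    generalize hA : Finset.univ.image f = A at cA
    generalize hB : Finset.univ.image g = B at cB
    have hAB : A.card = B.card := by omega
    have hpre : ∀ t : Fin A.card, ∃ x : C, f x = A.orderEmbOfFin rfl t := by
      intro t
      have hm : ∀ y ∈ A, ∃ x, f x = y := by rw [← hA]; simp
      exact hm _ (Finset.orderEmbOfFin_mem A rfl t)
    choose e he using hpre
    have hanti : ∀ t t', t < t' → g (e t') < g (e t) := by
      intro t t' htt
      have h7 : f (e t) < f (e t') := by
        rw [he, he]; exact (A.orderEmbOfFin rfl).strictMono htt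
      have := hC.anti (e t).1 (e t).2 (e t').1 (e t').2
        (fun hh => by rw [Subtype.ext hh] at h7; exact lt_irrefl _ h7)
      have := fval (e t); have := fval (e t')
      have := gval (e t); have := gval (e t')
      rw [Fin.lt_def] at *
      omega
    have hg : (fun t : Fin A.card => g (e t.rev)) = B.orderEmbOfFin hAB.symm := by
      apply Finset.orderEmbOfFin_unique
      · intro t
        rw [← hB]
        exact Finset.mem_image_of_mem _ (Finset.mem_univ _)
      · intro t t' htt
        exact hanti _ _ (Fin.rev_lt_rev.2 htt)
    have hg' : ∀ t : Fin A.card, B.orderEmbOfFin hAB.symm t.rev = g (e t) := by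
      intro t
      rw [← hg]; simp
    refine ⟨_, ⟨i, j, A, B, hAB, h1, h2, h3, ?_, ?_, by omega, ?_, rfl⟩, ?_⟩
    · intro a ha
      rw [← hA] at ha
      obtain ⟨x, _, rfl⟩ := Finset.mem_image.1 ha
      rw [fval]; exact (hC.mem x.1 x.2).2.1
    · intro a ha
      rw [← hB] at ha
      obtain ⟨x, _, rfl⟩ := Finset.mem_image.1 ha
      rw [gval]; exact (hC.mem x.1 x.2).2.2
    · rintro ⟨t, ht⟩
      rw [hg', ← he] at ht
      have := fval (e t); have := gval (e t)
      have := hb (e t).1 (e t).2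
      rw [ht] at *
      omega
    · rw [sum_single_le]
      intro v hv
      simp only [Fset, mem_filter, mem_univ, true_and] at hv
      obtain ⟨t, ht⟩ := hv
      rw [hg', ← he] at ht
      obtain ⟨⟨u, hu, huu⟩, _, _⟩ := hC.mem (e t).1 (e t).2
      rw [← fval, ← gval] at huu
      have huv : u = v := by
        have hu2 : (u.1.2 : ℕ) < u.1.1 := u.2
        have hv2 : (v.1.2 : ℕ) < v.1.1 := v.2
        apply Subtype.ext
        apply Prod.ext <;> apply Fin.ext
        · rcases ht with ⟨t1, t2⟩ | ⟨t1, t2⟩ <;> rw [t1, t2] at huu <;> omega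
        · rcases ht with ⟨t1, t2⟩ | ⟨t1, t2⟩ <;> rw [t1, t2] at huu <;> omega
      rw [← huv]; exact hu

theorem mem_Jss (K : Type*) [CommRing K] (n : ℕ) (w : Equiv.Perm ℕ)
    (f : MvPolynomial (SSVar n) K) :
    f ∈ JssIdeal K n w ↔ ∀ m ∈ f.support, Bad (SM m) n w := by
  rw [Jss_eq, MvPolynomial.mem_ideal_span_monomial_image]
  exact forall₂_congr fun m _ => Tset_iff w m

theorem mem_Jss_add (K : Type*) [CommRing K] (n : ℕ) (w : Equiv.Perm ℕ) (u : SSVar n)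
    (f : MvPolynomial (SSVar n) K) :
    f ∈ JssIdeal K n w + Ideal.span {MvPolynomial.X u} ↔
      ∀ m ∈ f.support, Bad (SM m) n w ∨ u ∈ m.support := by
  have : ({MvPolynomial.X u} : Set (MvPolynomial (SSVar n) K)) =
      (fun s => MvPolynomial.monomial s (1 : K)) '' {Finsupp.single u 1} := by
    simp [MvPolynomial.X]
  rw [Jss_eq, this, Ideal.add_eq_sup, ← Ideal.span_union, ← Set.image_union,
    MvPolynomial.mem_ideal_span_monomial_image]
  refine forall₂_congr fun m _ => ?_
  rw [← Tset_iff]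
  constructor
  · rintro ⟨s, hs | hs, hsm⟩
    · exact Or.inl ⟨s, hs, hsm⟩
    · right
      rw [Set.mem_singleton_iff] at hs
      subst hs
      have := hsm u
      simp at this
      simp; omega
  · rintro (⟨s, hs, hsm⟩ | hu)
    · exact ⟨s, Or.inl hs, hsm⟩
    · refine ⟨_, Or.inr rfl, ?_⟩
      rw [Finsupp.single_le_iff]
      simp at hu
      omega

theorem SM_ssvar {n : ℕ} (m : SSVar n →₀ ℕ) (p q : ℕ) (hp : p ≤ n) (hq : 1 ≤ q) (hqp : q < p) :
    SM m p q ↔ ssvar p q hp hq hqp ∈ m.support := by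
  constructor
  · rintro ⟨v, hv, hh⟩
    have : (v.1.2 : ℕ) < v.1.1 := v.2
    have : v = ssvar p q hp hq hqp := by
      apply Subtype.ext
      apply Prod.ext <;> apply Fin.ext <;> simp [ssvar] <;> omega
    rw [← this]; exact hv
  · intro h
    refine ⟨_, h, Or.inl ?_⟩
    simp [ssvar]; omega

theorem aux_rank_zero {K : Type*} [Field K] {a b : ℕ} {A : Matrix (Fin a) (Fin b) K}
    (h : A.rank = 0) : A = 0 := by
  unfold Matrix.rank at h
  rw [Submodule.finrank_eq_zero, LinearMap.range_eq_bot] at h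
  exact Matrix.ext_of_mulVec_single fun i => by
    have := congrArg (fun L => L (Pi.single i 1)) h
    simp at this
    simp only [Matrix.mulVec_single_one]
    rw [this]; rfl

theorem outer_facts {z : Equiv.Perm ℕ} {p q : ℕ} (hoc : IsOuterCorner z p q) (hqp : q < p)
    (hq1 : 1 ≤ q) (hinj : z 0 = 0) : z p = q ∧ ∀ a, 1 ≤ a → a < p → q < z a := by
  obtain ⟨_, _, h3, h4, h5⟩ := hoc
  have hpos : ∀ a, 1 ≤ a → 1 ≤ z a := by
    intro a ha
    by_contra hh
    have : z a = z 0 := by omega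
    have := z.injective this
    omega
  have hza : ∀ a, 1 ≤ a → a < p → q < z a := by
    intro a a1 a2
    rcases h4 with h4 | h4
    · omega
    · have := h4.2.2
      simp only [rnk, Finset.card_eq_zero, Finset.filter_eq_empty_iff] at this
      have := this (x := a) (by simp; omega)
      have := hpos a a1
      simp at *
      omega
  have h6 : rnk z p q ≠ 0 := fun hh => h3 ⟨by omega, hq1, hh⟩
  unfold rnk at h6
  obtain ⟨a, ha⟩ := Finset.card_pos.1 (Nat.pos_of_ne_zero h6)
  simp at ha
  have hap : a = p := by
    by_contra hne
    have := hza a (by omega) (by omega)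
    omega
  subst hap
  refine ⟨?_, hza⟩
  rcases h5 with h5 | h5
  · omega
  · have := h5.2.2
    simp only [rnk, Finset.card_eq_zero, Finset.filter_eq_empty_iff] at this
    have := this (x := a) (by simp; omega)
    simp at this
    omega

end

/-- Let `z ∈ FPF_n(I_n)` and let `(p,q)` be an outer corner of
`dom(z)` with `n ≥ p > q`. Then: (1) `Ψ(z,p) ⊆ FPF_n(I_n)`;
(2) `I(X^ss_z) + (u_{pq}) ⊆ ⋂_{v ∈ Ψ(z,p)} I(X^ss_v)`; and
(3) `J^ss_z + (u_{pq}) = ⋂_{v ∈ Ψ(z,p)} J^ss_v`. -/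
theorem statement15 (K : Type*) [Field K] [IsAlgClosed K] (n : ℕ) (hn : 1 ≤ n)
    (z : Equiv.Perm ℕ) (hz : z ∈ FPFIn n) (p q : ℕ) (hoc : IsOuterCorner z p q)
    (hpn : p ≤ n) (hqp : q < p) (hq1 : 1 ≤ q) :
    PsiSet z p ⊆ FPFIn n ∧
      (IXss K n z + Ideal.span {MvPolynomial.X (ssvar p q hpn hq1 hqp)} ≤
        ⨅ v ∈ PsiSet z p, IXss K n v) ∧
      (JssIdeal K n z + Ideal.span {MvPolynomial.X (ssvar p q hpn hq1 hqp)} =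
        ⨅ v ∈ PsiSet z p, JssIdeal K n v) := by
  obtain ⟨hzp, hza⟩ := outer_facts hoc hqp hq1 hz.1.1
  have hst : ∀ r, p < r → Setup z p q r := fun r hr => ⟨hz.1, hq1, hqp, hr, hzp⟩
  have hpsi : ∀ v, v ∈ PsiSet z p ↔ ∃ r, p < r ∧ v = cj z p r ∧ Rec z p q r ∧
      ¬ (p < z r ∧ z r < r) := by
    intro v
    constructor
    · rintro ⟨r, hr, rfl, he⟩
      exact ⟨r, hr, rfl, (hst r hr).ell_iff.1 he⟩
    · rintro ⟨r, hr, rfl, he⟩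
      exact ⟨r, hr, rfl, (hst r hr).ell_iff.2 he⟩
  have hrle : ∀ v ∈ PsiSet z p, ∀ i j, rnk v i j ≤ rnk z i j := by
    intro v hv i j
    obtain ⟨r, hr, rfl, he, _⟩ := (hpsi v).1 hv
    have := (hst r hr).rnk he.1 i j
    omega
  have hr0 : ∀ v ∈ PsiSet z p, rnk v p q = 0 := by
    intro v hv
    obtain ⟨r, hr, rfl, he, _⟩ := (hpsi v).1 hv
    have h1 := (hst r hr).rnk he.1 p q
    have h2 : rnk z p q ≤ 1 := by
      have : ((Finset.Icc 1 p).filter fun a => z a ∈ Finset.Icc 1 q) ⊆ {p} := by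
        intro a ha
        simp at ha ⊢
        by_contra hne
        have := hza a (by omega) (by omega)
        omega
      simpa [rnk] using Finset.card_le_card this
    rw [if_pos ⟨⟨le_refl _, hr⟩, le_refl _, he.1⟩] at h1
    omega
  refine ⟨?_, ?_, ?_⟩
  · intro v hv
    obtain ⟨r, hr, rfl, he1, he2⟩ := (hpsi v).1 hv
    exact (hst r hr).mem_FPFIn hz hpn he1 he2
  · refine le_iInf₂ fun v hv => ?_
    rw [Ideal.add_eq_sup]
    refine sup_le ?_ ?_
    · intro f hf A hA
      refine hf A ⟨hA.1, fun i j hi hj i1 j1 => (hA.2 i j hi hj i1 j1).trans (hrle v hv i j)⟩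
    · rw [Ideal.span_singleton_le_iff_mem]
      intro A hA
      rw [MvPolynomial.eval_X]
      have h1 := hA.2 p q hpn (by omega) (by omega) hq1
      rw [hr0 v hv, Nat.le_zero] at h1
      replace h1 := aux_rank_zero h1
      have := congrFun (congrFun h1 ⟨p - 1, by omega⟩) ⟨q - 1, by omega⟩
      simpa [ssvar] using this
  · ext f
    rw [mem_Jss_add]
    simp only [Submodule.mem_iInf]
    simp only [mem_Jss]
    constructor
    · intro h v hv m hm
      rcases h m hm with ⟨i, j, C, h1, h2, h3, hC, hc⟩ | hu
      · obtain ⟨D, hD, hDc⟩ := Finset.exists_subset_card_eq (s := C) (n := rnk v i j + 1)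
          (by have := hrle v hv i j; omega)
        exact ⟨i, j, D, h1, h2, h3, hC.mono hD, hDc⟩
      · refine ⟨p, q, {(p, q)}, hq1, hqp.le, hpn, ⟨?_, ?_⟩, by rw [hr0 v hv]; simp⟩
        · intro y hy
          rw [Finset.mem_singleton] at hy
          subst hy
          exact ⟨(SM_ssvar m p q hpn hq1 hqp).2 hu, le_refl _, le_refl _⟩
        · intro y hy y' hy' hne
          rw [Finset.mem_singleton] at hy hy'
          exact absurd (hy.trans hy'.symm) hne
    · intro h m hm
      by_cases hnb : Bad (SM m) n z
      · exact Or.inl hnb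
      right
      rw [← SM_ssvar]
      have ctx : Ctx z p q n (SM m) := by
        refine ⟨hz.1, hq1, hqp, hpn, hzp, hza, ?_, ?_, ?_⟩
        · rintro a b ⟨v, hv, hh⟩
          exact ⟨v, hv, by tauto⟩
        · rintro a ⟨v, hv, hh⟩
          have : (v.1.2 : ℕ) < v.1.1 := v.2
          omega
        · rintro a b ⟨v, hv, hh⟩
          omega
      exact ctx.main hnb fun r hr h1 h2 => h _ ((hpsi _).2 ⟨r, hr, rfl, h1, h2⟩) m hm

end Paper
end
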